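/- arXiv:2206.11295 — 5 statements merged into one kernel-verified Lean document; each statement's English description precedes it below -/
import Mathlib

section
/- Let m ≥ 2 and let B_1,…,B_n (n ≥ 2) be a partition of {1,…,m} into nonempty blocks; write k ∼ l if k,l lie in the same block and k ≁ l otherwise. Let h be a smooth positive function on a neighborhood of 0 in ℝ^m. Then the following are equivalent: (a) there exist a neighborhood U of 0 and a smooth diffeomorphism φ from U onto an open subset of ℝ^m of block-product form φ(x) = (φ_1(x_{B_1}),…,φ_n(x_{B_n})) (each φ_i a smooth map of the block-B_i variables with values in ℝ^{|B_i|}), with φ(0)=0, such that h(x) = |∏_{i=1}^n det Dφ_i(x_{B_i})| for all x ∈ U; (b) the mixed partial derivatives ∂²(log h)/∂x_k∂x_l vanish on a neighborhood of 0 for every pair of indices k ≁ l. -/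
open MeasureTheory

noncomputable section

/-- Second mixed partial derivative `∂²(log h)/∂x_k∂x_l` at `x`. -/
def logpd2 {m : ℕ} (h : (Fin m → ℝ) → ℝ) (k l : Fin m) (x : Fin m → ℝ) : ℝ :=
  fderiv ℝ (fun y => fderiv ℝ (fun z => Real.log (h z)) y (Pi.single k (1:ℝ)))
    x (Pi.single l 1)

/-- Determinant of the Jacobian of the block map `φ_i` (the block of the Jacobian of `φ`
corresponding to rows and columns in `B i`). -/
def blockDet {m n : ℕ} (B : Fin n → Finset (Fin m)) (φ : (Fin m → ℝ) → (Fin m → ℝ))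
    (i : Fin n) (x : Fin m → ℝ) : ℝ :=
  Matrix.det (Matrix.of fun a k : ↥(B i) =>
    fderiv ℝ (fun z => φ z a.1) x (Pi.single k.1 (1:ℝ)))

/-!
For a block-product map, each factor `det Dφ_i` depends only on the coordinates in its block, so
`log h = ∑ i, log |det Dφ_i|` is a sum of functions of single blocks and every derivative of it
across two blocks vanishes.

Conversely, if these derivatives vanish on a ball, then `∂_k (log h)` depends only on the block
of `k`. Hence `log h` minus the sum of its restrictions to the coordinate subspaces of the blocks
has zero gradient, so it is constant and `h = ∏ i, g i` with `g i` a positive function of the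
`i`-th block. Each `g i` is a Jacobian determinant: integrate it along one pivot coordinate of its
block and keep the other coordinates. As `g i` is positive, this map is strictly increasing in the
pivot coordinate, hence injective.
-/

open Set Filter
open scoped ContDiff Topology

variable {ι κ : Type*} {E F : Type*} [NormedAddCommGroup E] [NormedSpace ℝ E]
  [NormedAddCommGroup F] [NormedSpace ℝ F]

/-- The function `f` depends only on the coordinates in `s` as long as its argument stays in `U`:
the localization of `DependsOn` to a domain `U`, which need not be a product set. -/
def DependsOnWithin {β : Type*} (f : (ι → ℝ) → β) (s : Set ι) (U : Set (ι → ℝ)) : Prop :=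
  ∀ x ∈ U, ∀ y ∈ U, (∀ k ∈ s, x k = y k) → f x = f y

lemma dependsOnWithin_univ {β : Type*} {f : (ι → ℝ) → β} {s : Set ι} :
    DependsOnWithin f s univ ↔ DependsOn f s :=
  ⟨fun hf _ _ h => hf _ (mem_univ _) _ (mem_univ _) h, fun hf _ _ _ _ h => hf h⟩

namespace DependsOnWithin

variable {s : Set ι} {U : Set (ι → ℝ)}

lemma comp {β γ : Type*} {f : (ι → ℝ) → β} (hf : DependsOnWithin f s U) (g : β → γ) :
    DependsOnWithin (fun x => g (f x)) s U :=
  fun x hx y hy h => congrArg g (hf x hx y hy h)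

variable [Finite ι] {f : (ι → ℝ) → F}

protected lemma fderiv (hf : DependsOnWithin f s U) (hU : IsOpen U) :
    DependsOnWithin (fderiv ℝ f) s U := by
  cases nonempty_fintype ι
  intro x hx y hy hxy
  have hshift : ∀ᶠ z in 𝓝 x, z + (y - x) ∈ U :=
    (by fun_prop : ContinuousAt (fun z => z + (y - x)) x).eventually_mem
      (hU.mem_nhds (by simpa using hy))
  have heq : f =ᶠ[𝓝 x] fun z => f (z + (y - x)) := by
    filter_upwards [hU.mem_nhds hx, hshift] with z hz hz'
    exact hf z hz _ hz' fun k hk => by simp [hxy k hk]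
  rw [heq.fderiv_eq, fderiv_comp_add_right, add_sub_cancel]

lemma fderiv_apply_eq_zero (hf : DependsOnWithin f s U) (hU : IsOpen U) {x v : ι → ℝ}
    (hx : x ∈ U) (hv : ∀ k ∈ s, v k = 0) : fderiv ℝ f x v = 0 := by
  cases nonempty_fintype ι
  by_cases hd : DifferentiableAt ℝ f x
  · have hline : ∀ᶠ t : ℝ in 𝓝 0, x + t • v ∈ U :=
      (by fun_prop : ContinuousAt (fun t : ℝ => x + t • v) 0).eventually_mem
        (hU.mem_nhds (by simpa using hx))
    have hconst : (fun t : ℝ => f (x + t • v)) =ᶠ[𝓝 0] fun _ => f x := by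
      filter_upwards [hline] with t ht
      exact hf _ ht _ hx fun k hk => by simp [hv k hk]
    rw [← hd.lineDeriv_eq_fderiv, lineDeriv, hconst.deriv_eq, deriv_const]
  · simp [fderiv_zero_of_not_differentiableAt hd]

end DependsOnWithin

/-- The projection of `ι → ℝ` onto the coordinate subspace of the coordinates in `s`. -/
def coordProj (s : Set ι) : (ι → ℝ) →L[ℝ] (ι → ℝ) :=
  ContinuousLinearMap.pi (s.indicator fun k => ContinuousLinearMap.proj k)

lemma coordProj_apply (s : Set ι) (x : ι → ℝ) : coordProj s x = s.indicator x := by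
  classical
  ext k
  simp only [coordProj, ContinuousLinearMap.coe_pi', indicator_apply]
  split_ifs <;> rfl

lemma dependsOn_comp_coordProj {β : Type*} (f : (ι → ℝ) → β) (s : Set ι) :
    DependsOn (fun x => f (coordProj s x)) s := by
  intro x y hxy
  simp only [coordProj_apply, indicator_congr hxy]

lemma norm_coordProj_le [Fintype ι] (s : Set ι) (x : ι → ℝ) : ‖coordProj s x‖ ≤ ‖x‖ := by
  rw [coordProj_apply]
  exact (pi_norm_le_iff_of_nonneg (norm_nonneg x)).2 fun k =>
    (norm_indicator_le_norm_self x k).trans (norm_le_pi_norm x k)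

lemma coordProj_mem_ball [Fintype ι] {s : Set ι} {x : ι → ℝ} {r : ℝ} (hx : x ∈ Metric.ball 0 r) :
    coordProj s x ∈ Metric.ball 0 r :=
  mem_ball_zero_iff.2 ((norm_coordProj_le s x).trans_lt (mem_ball_zero_iff.1 hx))

variable [DecidableEq ι]

/-- The partial derivative `∂f/∂x_k`, so that `logpd2 h k l = ∂_l ∂_k (log ∘ h)`. -/
def partialDeriv (k : ι) (f : (ι → ℝ) → F) (x : ι → ℝ) : F :=
  fderiv ℝ f x (Pi.single k 1)

lemma partialDeriv_congr {f g : (ι → ℝ) → F} {x : ι → ℝ} (h : f =ᶠ[𝓝 x] g) (k : ι) :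
    partialDeriv k f =ᶠ[𝓝 x] partialDeriv k g := by
  filter_upwards [h.eventuallyEq_nhds] with y hy
  rw [partialDeriv, partialDeriv, hy.fderiv_eq]

lemma contDiffOn_partialDeriv [Fintype ι] {f : (ι → ℝ) → F} {U : Set (ι → ℝ)} {m n : ℕ∞ω}
    (hf : ContDiffOn ℝ n f U) (hU : IsOpen U) (hmn : m + 1 ≤ n) (k : ι) :
    ContDiffOn ℝ m (partialDeriv k f) U :=
  (hf.fderiv_of_isOpen hU hmn).clm_apply contDiffOn_const

lemma partialDeriv_sum [Finite ι] [Fintype κ] {f : κ → (ι → ℝ) → F} {x : ι → ℝ} (k : ι)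
    (hf : ∀ i, DifferentiableAt ℝ (f i) x) :
    partialDeriv k (fun y => ∑ i, f i y) x = ∑ i, partialDeriv k (f i) x := by
  cases nonempty_fintype ι
  simp only [partialDeriv, fderiv_fun_sum fun i _ => hf i, sum_apply]

lemma DependsOnWithin.partialDeriv_partialDeriv_eq_zero [Finite ι] {f : (ι → ℝ) → F}
    {s : Set ι} {U : Set (ι → ℝ)} (hf : DependsOnWithin f s U) (hU : IsOpen U) {k l : ι}
    (hkl : ¬(k ∈ s ∧ l ∈ s)) {x : ι → ℝ} (hx : x ∈ U) :
    partialDeriv l (partialDeriv k f) x = 0 := by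
  have single_eq_zero : ∀ j ∉ s, ∀ i ∈ s, (Pi.single j 1 : ι → ℝ) i = 0 :=
    fun j hj i hi => Pi.single_eq_of_ne (ne_of_mem_of_not_mem hi hj) 1
  rcases not_and_or.1 hkl with hk | hl
  · have hzero : partialDeriv k f =ᶠ[𝓝 x] fun _ => 0 := by
      filter_upwards [hU.mem_nhds hx] with y hy
      exact hf.fderiv_apply_eq_zero hU hy (single_eq_zero k hk)
    simp [partialDeriv, hzero.fderiv_eq]
  · exact ((hf.fderiv hU).comp fun L => L (Pi.single k 1)).fderiv_apply_eq_zero hU hx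
      (single_eq_zero l hl)

lemma dependsOnWithin_of_partialDeriv_eq_zero [Finite ι] {f : (ι → ℝ) → ℝ} {s : Set ι}
    {U : Set (ι → ℝ)} (hU : IsOpen U) (hconv : Convex ℝ U) (hf : DifferentiableOn ℝ f U)
    (hzero : ∀ l ∉ s, ∀ x ∈ U, partialDeriv l f x = 0) : DependsOnWithin f s U := by
  cases nonempty_fintype ι
  intro x hx y hy hxy
  obtain ⟨z, hz, hmvt⟩ := domain_mvt (fun w hw =>
    (hf.differentiableAt (hU.mem_nhds hw)).hasFDerivAt.hasFDerivWithinAt) hconv hx hy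
  have hslope : fderiv ℝ f z (y - x) = 0 := by
    rw [pi_eq_sum_univ' (y - x), map_sum]
    refine Finset.sum_eq_zero fun l _ => ?_
    rw [map_smul]
    by_cases hl : l ∈ s
    · simp [hxy l hl]
    · rw [show fderiv ℝ f z (Pi.single l 1) = 0 from hzero l hl z (hconv.segment_subset hx hy hz),
        smul_zero]
  linarith

lemma logpd2_eq_zero_of_eq_abs_prod {m : ℕ} [Fintype κ] {B : κ → Set (Fin m)}
    {f : κ → (Fin m → ℝ) → ℝ} {h : (Fin m → ℝ) → ℝ} {U : Set (Fin m → ℝ)} (hU : IsOpen U)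
    (hf : ∀ i, ContDiffOn ℝ 2 (f i) U) (hdep : ∀ i, DependsOnWithin (f i) (B i) U)
    (hpos : ∀ x ∈ U, 0 < h x) (hprod : ∀ x ∈ U, h x = |∏ i, f i x|) {k l : Fin m}
    (hkl : ¬∃ i, k ∈ B i ∧ l ∈ B i) {x : Fin m → ℝ} (hx : x ∈ U) : logpd2 h k l x = 0 := by
  have hne : ∀ y ∈ U, ∀ i, f i y ≠ 0 := fun y hy i =>
    Finset.prod_ne_zero_iff.1 (abs_pos.1 (hprod y hy ▸ hpos y hy)) i (Finset.mem_univ i)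
  have hlog : ∀ i, ContDiffOn ℝ 2 (fun y => Real.log (f i y)) U :=
    fun i => (hf i).log fun y hy => hne y hy i
  have hsum : (fun y => Real.log (h y)) =ᶠ[𝓝 x] fun y => ∑ i, Real.log (f i y) := by
    filter_upwards [hU.mem_nhds hx] with y hy
    rw [hprod y hy, Real.log_abs, Real.log_prod fun i _ => hne y hy i]
  have hdiff : ∀ i, ∀ y ∈ U, DifferentiableAt ℝ (fun z => Real.log (f i z)) y := fun i y hy =>
    ((hlog i).differentiableOn two_ne_zero).differentiableAt (hU.mem_nhds hy)
  have hdiff' : ∀ i, DifferentiableAt ℝ (partialDeriv k fun z => Real.log (f i z)) x := fun i =>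
    ((contDiffOn_partialDeriv (m := 1) (hlog i) hU (by norm_num) k).differentiableOn
      one_ne_zero).differentiableAt (hU.mem_nhds hx)
  have hfirst : partialDeriv k (fun y => Real.log (h y)) =ᶠ[𝓝 x]
      fun y => ∑ i, partialDeriv k (fun z => Real.log (f i z)) y := by
    filter_upwards [partialDeriv_congr hsum k, hU.mem_nhds hx] with y hy hyU
    rw [hy, partialDeriv_sum k fun i => hdiff i y hyU]
  calc logpd2 h k l x = partialDeriv l (partialDeriv k fun y => Real.log (h y)) x := rfl
    _ = ∑ i, partialDeriv l (partialDeriv k fun z => Real.log (f i z)) x := by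
      rw [(partialDeriv_congr hfirst l).eq_of_nhds, partialDeriv_sum l hdiff']
    _ = 0 := Finset.sum_eq_zero fun i _ =>
      ((hdep i).comp Real.log).partialDeriv_partialDeriv_eq_zero hU (fun hi => hkl ⟨i, hi⟩) hx

section BlockDet

variable {m n : ℕ} {B : Fin n → Finset (Fin m)} {φ : (Fin m → ℝ) → Fin m → ℝ}
  {U : Set (Fin m → ℝ)} {i : Fin n}

lemma dependsOnWithin_blockDet (hU : IsOpen U)
    (hφ : ∀ a ∈ B i, DependsOnWithin (fun x => φ x a) (B i) U) :
    DependsOnWithin (blockDet B φ i) (B i) U := by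
  intro x hx y hy hxy
  rw [blockDet, blockDet]
  congr 2 with a k
  rw [(hφ a a.2).fderiv hU x hx y hy hxy]

lemma contDiffOn_blockDet {r q : ℕ∞ω} (hU : IsOpen U) (hφ : ContDiffOn ℝ q φ U) (hrq : r + 1 ≤ q) :
    ContDiffOn ℝ r (blockDet B φ i) U := by
  unfold blockDet
  simp only [Matrix.det_apply, Matrix.of_apply]
  exact ContDiffOn.sum fun σ _ => (contDiffOn_prod fun k _ =>
    contDiffOn_partialDeriv (contDiffOn_pi.1 hφ (σ k)) hU hrq k).const_smul _

end BlockDet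

lemma partialDeriv_comp_coordProj [Finite ι] {f : (ι → ℝ) → F} {s : Set ι} {x : ι → ℝ}
    (hf : DifferentiableAt ℝ f (coordProj s x)) (k : ι) [Decidable (k ∈ s)] :
    partialDeriv k (fun y => f (coordProj s y)) x =
      if k ∈ s then partialDeriv k f (coordProj s x) else 0 := by
  cases nonempty_fintype ι
  have hchain : partialDeriv k (fun y => f (coordProj s y)) x =
      fderiv ℝ f (coordProj s x) (coordProj s (Pi.single k 1)) := by
    rw [partialDeriv, fderiv_fun_comp x hf (coordProj s).differentiableAt, (coordProj s).fderiv,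
      ContinuousLinearMap.comp_apply]
  have hsingle : coordProj s (Pi.single k 1) = if k ∈ s then Pi.single k (1 : ℝ) else 0 := by
    rw [coordProj_apply]
    ext j
    by_cases hjk : j = k
    · subst hjk
      by_cases hj : j ∈ s <;> simp [hj]
    · by_cases hk : k ∈ s <;> simp [hk, hjk]
  rw [hchain, hsingle]
  split_ifs <;> simp [partialDeriv]

lemma eq_add_sum_of_partialDeriv_partialDeriv_eq_zero [Fintype ι] [Fintype κ]
    {s : κ → Set ι} (P : IndexedPartition s)
    {f : (ι → ℝ) → ℝ} {r : ℝ} (hf : ContDiffOn ℝ 2 f (Metric.ball 0 r))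
    (hmixed : ∀ k l, P.index k ≠ P.index l → ∀ x ∈ Metric.ball 0 r,
      partialDeriv l (partialDeriv k f) x = 0)
    {x : ι → ℝ} (hx : x ∈ Metric.ball 0 r) :
    f x = f 0 + ∑ i, (f (coordProj (s i) x) - f 0) := by
  classical
  have hopen : IsOpen (Metric.ball (0 : ι → ℝ) r) := Metric.isOpen_ball
  have hconv : Convex ℝ (Metric.ball (0 : ι → ℝ) r) := convex_ball 0 r
  have hdiff : ∀ y ∈ Metric.ball 0 r, DifferentiableAt ℝ f y := fun y hy =>
    (hf.differentiableOn two_ne_zero).differentiableAt (hopen.mem_nhds hy)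
  have hdiffProj : ∀ i, ∀ y ∈ Metric.ball 0 r,
      DifferentiableAt ℝ (fun y => f (coordProj (s i) y)) y := fun i y hy =>
    (hdiff _ (coordProj_mem_ball hy)).comp y (coordProj (s i)).differentiableAt
  have hpartial : ∀ k, DependsOnWithin (partialDeriv k f) (s (P.index k)) (Metric.ball 0 r) :=
    fun k => dependsOnWithin_of_partialDeriv_eq_zero hopen hconv
      ((contDiffOn_partialDeriv (m := 1) hf hopen (by norm_num) k).differentiableOn one_ne_zero)
      fun l hl => hmixed k l fun hkl => hl (P.mem_iff_index_eq.2 hkl.symm)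
  have hremainder : DependsOnWithin (fun y => f y - ∑ i, f (coordProj (s i) y)) ∅
      (Metric.ball 0 r) := by
    refine dependsOnWithin_of_partialDeriv_eq_zero hopen hconv (fun y hy =>
      ((hdiff y hy).fun_sub (.fun_sum fun i _ => hdiffProj i y hy)).differentiableWithinAt)
      fun k _ y hy => ?_
    have hblock : partialDeriv k f (coordProj (s (P.index k)) y) = partialDeriv k f y :=
      hpartial k _ (coordProj_mem_ball hy) y hy fun j hj => by
        rw [coordProj_apply, indicator_of_mem hj]
    calc partialDeriv k (fun y => f y - ∑ i, f (coordProj (s i) y)) y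
        = partialDeriv k f y - ∑ i, partialDeriv k (fun y => f (coordProj (s i) y)) y := by
          rw [← partialDeriv_sum k fun i => hdiffProj i y hy, partialDeriv,
            fderiv_fun_sub (hdiff y hy) (.fun_sum fun i _ => hdiffProj i y hy)]
          rfl
      _ = partialDeriv k f y - partialDeriv k f (coordProj (s (P.index k)) y) := by
          simp only [partialDeriv_comp_coordProj (hdiff _ (coordProj_mem_ball hy)),
            P.mem_iff_index_eq, Finset.sum_ite_eq, Finset.mem_univ, if_true]
      _ = 0 := by rw [hblock, sub_self]
  have hzero : (0 : ι → ℝ) ∈ Metric.ball 0 r :=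
    Metric.mem_ball_self (Metric.pos_of_mem_ball hx)
  have hconst := hremainder x hx 0 hzero fun k hk => hk.elim
  simp only [map_zero] at hconst
  rw [Finset.sum_sub_distrib]
  linarith

lemma exists_contDiff_eventuallyEq_of_contDiffOn [FiniteDimensional ℝ E] {f : E → F} {V : Set E}
    {a : E} {n : ℕ∞} (hV : IsOpen V) (ha : a ∈ V) (hf : ContDiffOn ℝ n f V) :
    ∃ g : E → F, ContDiff ℝ n g ∧ g =ᶠ[𝓝 a] f := by
  obtain ⟨ε, hε, hεV⟩ := Metric.isOpen_iff.1 hV a ha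
  let χ : ContDiffBump a := ⟨ε / 4, ε / 2, by positivity, by linarith⟩
  have hsupport : tsupport χ ⊆ V := by
    rw [χ.tsupport_eq]
    exact (Metric.closedBall_subset_ball (half_lt_self hε)).trans hεV
  refine ⟨fun x => χ x • f x, contDiff_iff_contDiffAt.2 fun x => ?_, ?_⟩
  · by_cases hx : x ∈ V
    · exact χ.contDiff.contDiffAt.smul (hf.contDiffAt (hV.mem_nhds hx))
    · refine (contDiffAt_const (c := 0)).congr_of_eventuallyEq ?_
      filter_upwards [notMem_tsupport_iff_eventuallyEq.1 fun h => hx (hsupport h)] with y hy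
      simp [hy]
  · filter_upwards [χ.eventuallyEq_one] with y hy
    simp [hy]

lemma exists_prod_factorization {m : ℕ} [Fintype κ] [Nonempty κ] {s : κ → Set (Fin m)}
    (P : IndexedPartition s) {h : (Fin m → ℝ) → ℝ} {W : Set (Fin m → ℝ)} (hW : IsOpen W)
    (h0W : 0 ∈ W) (hsm : ContDiffOn ℝ ∞ h W) (hpos : ∀ x ∈ W, 0 < h x)
    (hmixed : ∀ k l, P.index k ≠ P.index l → ∀ x ∈ W, logpd2 h k l x = 0) :
    ∃ g : κ → (Fin m → ℝ) → ℝ, (∀ i, ContDiff ℝ ∞ (g i)) ∧ (∀ i x, 0 < g i x) ∧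
      (∀ i, DependsOn (g i) (s i)) ∧ ∀ᶠ x in 𝓝 0, h x = ∏ i, g i x := by
  obtain ⟨f, hf, hfh⟩ := exists_contDiff_eventuallyEq_of_contDiffOn hW h0W
    (hsm.log fun x hx => (hpos x hx).ne')
  obtain ⟨r, hr, hball⟩ := Metric.eventually_nhds_iff_ball.1
    (hfh.eventuallyEq_nhds.and (hW.mem_nhds h0W))
  have hsep : ∀ x ∈ Metric.ball 0 r, f x = f 0 + ∑ i, (f (coordProj (s i) x) - f 0) := by
    refine fun x => eq_add_sum_of_partialDeriv_partialDeriv_eq_zero P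
      (contDiff_infty.1 hf 2).contDiffOn fun k l hkl y hy => ?_
    obtain ⟨hfhy, hyW⟩ := hball y hy
    rw [(partialDeriv_congr (partialDeriv_congr hfhy k) l).eq_of_nhds]
    exact hmixed k l hkl y hyW
  -- The constant `f 0` is shared equally among the factors.
  let c : ℝ := f 0 - f 0 / Fintype.card κ
  refine ⟨fun i x => Real.exp (f (coordProj (s i) x) - c), fun i => ?_, fun i x => Real.exp_pos _,
    fun i => dependsOn_comp_coordProj (fun y => Real.exp (f y - c)) (s i), ?_⟩
  · exact ((hf.comp (coordProj (s i)).contDiff).sub contDiff_const).exp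
  · filter_upwards [Metric.ball_mem_nhds 0 hr] with x hx
    obtain ⟨hfhx, hxW⟩ := hball x hx
    have hsum : ∑ i, (f (coordProj (s i) x) - c) = f x := by
      rw [hsep x hx]
      simp only [c, Finset.sum_sub_distrib, Finset.sum_const, Finset.card_univ, nsmul_eq_mul]
      field_simp
      ring
    rw [← Real.exp_sum, hsum, hfhx.eq_of_nhds, Real.exp_log (hpos x hxW)]

section ParametricIntegral

variable [FiniteDimensional ℝ E] {g : E × ℝ → F}

lemma hasFDerivAt_intervalIntegral_of_contDiff (hg : ContDiff ℝ 1 g) (a b : ℝ) (x : E) :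
    HasFDerivAt (fun x => ∫ t in a..b, g (x, t))
      (∫ t in a..b, (fderiv ℝ g (x, t)).comp (.inl ℝ E ℝ)) x := by
  have hcont : Continuous g := hg.continuous
  have hderiv : Continuous fun p => (fderiv ℝ g p).comp (.inl ℝ E ℝ) :=
    (hg.continuous_fderiv one_ne_zero).clm_comp continuous_const
  have : ProperSpace E := FiniteDimensional.proper_real E
  obtain ⟨C, hC⟩ := ((isCompact_closedBall x 1).prod isCompact_uIcc).exists_bound_of_continuousOn
    (hderiv.continuousOn (s := Metric.closedBall x 1 ×ˢ uIcc a b))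
  refine intervalIntegral.hasFDerivAt_integral_of_dominated_of_fderiv_le (bound := fun _ => C)
    (F' := fun x t => (fderiv ℝ g (x, t)).comp (.inl ℝ E ℝ))
    (Metric.closedBall_mem_nhds x one_pos) (.of_forall fun y => ?_) ?_ ?_
    (.of_forall fun t ht y hy => hC (y, t) ⟨hy, uIoc_subset_uIcc ht⟩) intervalIntegrable_const
    (.of_forall fun t _ y _ => ?_)
  · exact Continuous.aestronglyMeasurable (by fun_prop)
  · exact Continuous.intervalIntegrable (by fun_prop) _ _
  · exact (hderiv.comp (by fun_prop : Continuous fun t : ℝ => (x, t))).aestronglyMeasurable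
  · exact ((hg.differentiable one_ne_zero) (y, t)).hasFDerivAt.comp y (hasFDerivAt_prodMk_left y t)

lemma contDiff_intervalIntegral {n : ℕ∞} (hg : ContDiff ℝ n g) (a b : ℝ) :
    ContDiff ℝ n fun x => ∫ t in a..b, g (x, t) := by
  suffices hnat : ∀ n : ℕ, ∀ g : E × ℝ → F, ContDiff ℝ n g →
      ContDiff ℝ n fun x => ∫ t in a..b, g (x, t) from
    contDiff_iff_forall_nat_le.2 fun k hk => hnat k g (contDiff_iff_forall_nat_le.1 hg k hk)
  intro n
  induction n with
  | zero =>
    intro g hg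
    exact contDiff_zero.2 <|
      intervalIntegral.continuous_parametric_intervalIntegral_of_continuous'
        (f := fun x t => g (x, t)) hg.continuous a b
  | succ n ih =>
    intro g hg
    push_cast at hg ⊢
    have hg' : ContDiff ℝ 1 g := hg.of_le (by simp)
    have hderiv : ∀ x, HasFDerivAt _ _ x := hasFDerivAt_intervalIntegral_of_contDiff hg' a b
    refine contDiff_succ_iff_fderiv_apply.2
      ⟨fun x => (hderiv x).differentiableAt, by simp, fun v => ?_⟩
    have happly : (fun x => fderiv ℝ (fun x => ∫ t in a..b, g (x, t)) x v) =
        fun x => ∫ t in a..b, fderiv ℝ g (x, t) (v, 0) := by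
      ext x
      have hcont : Continuous fun t : ℝ => (fderiv ℝ g (x, t)).comp (.inl ℝ E ℝ) :=
        ((hg'.continuous_fderiv one_ne_zero).comp (by fun_prop)).clm_comp continuous_const
      rw [(hderiv x).fderiv, ContinuousLinearMap.intervalIntegral_apply
        (hcont.intervalIntegrable a b)]
      rfl
    rw [happly]
    exact ih _ ((hg.fderiv_right le_rfl).clm_apply contDiff_const)

end ParametricIntegral

section PartialPrimitive

/-- The primitive of `g` in the variable `x_a` that vanishes on the hyperplane `x_a = 0`. -/
def partialPrimitive (g : (ι → ℝ) → ℝ) (a : ι) (x : ι → ℝ) : ℝ :=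
  ∫ t in (0 : ℝ)..x a, g (Function.update x a t)

variable {g : (ι → ℝ) → ℝ} {a : ι}

lemma partialPrimitive_of_apply_eq_zero {x : ι → ℝ} (hx : x a = 0) :
    partialPrimitive g a x = 0 := by
  rw [partialPrimitive, hx, intervalIntegral.integral_same]

lemma dependsOn_partialPrimitive {s : Set ι} (hg : DependsOn g s) (ha : a ∈ s) :
    DependsOn (partialPrimitive g a) s := by
  intro x y hxy
  rw [partialPrimitive, partialPrimitive, hxy a ha]
  congr 1 with t
  refine hg fun k hk => ?_
  by_cases hka : k = a
  · subst hka; simp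
  · simp [hka, hxy k hk]

lemma hasDerivAt_partialPrimitive_update (hg : Continuous g) (x : ι → ℝ) (u : ℝ) :
    HasDerivAt (fun u => partialPrimitive g a (Function.update x a u))
      (g (Function.update x a u)) u := by
  have hcont : Continuous fun t => g (Function.update x a t) := hg.comp (by fun_prop)
  simpa only [partialPrimitive, Function.update_self, Function.update_idem] using
    (hcont.integral_hasStrictDerivAt 0 u).hasDerivAt

lemma strictMono_partialPrimitive_update (hg : Continuous g) (hpos : ∀ x, 0 < g x)
    (x : ι → ℝ) : StrictMono fun u => partialPrimitive g a (Function.update x a u) :=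
  strictMono_of_hasDerivAt_pos (hasDerivAt_partialPrimitive_update hg x) fun _ => hpos _

variable [Fintype ι]

lemma contDiff_update_prod (a : ι) {n : ℕ∞ω} :
    ContDiff ℝ n fun p : (ι → ℝ) × ℝ => Function.update p.1 a p.2 := by
  refine contDiff_pi.2 fun k => ?_
  by_cases hka : k = a
  · subst hka
    simpa only [Function.update_self] using contDiff_snd
  · simp only [Function.update_of_ne hka]
    fun_prop

lemma contDiff_partialPrimitive {n : ℕ∞} (hg : ContDiff ℝ n g) :
    ContDiff ℝ n (partialPrimitive g a) := by
  -- Rescaling the variable of integration by `x a` makes the limits of integration constant.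
  have hscale : partialPrimitive g a =
      fun x => x a * ∫ t in (0 : ℝ)..1, g (Function.update x a (t * x a)) := by
    ext x
    have := intervalIntegral.smul_integral_comp_mul_right (a := 0) (b := 1)
      (fun t => g (Function.update x a t)) (x a)
    rw [zero_mul, one_mul, smul_eq_mul] at this
    rw [this, partialPrimitive]
  have hintegrand : ContDiff ℝ n fun p : (ι → ℝ) × ℝ =>
      g (Function.update p.1 a (p.2 * p.1 a)) :=
    hg.comp ((contDiff_update_prod a).comp
      (by fun_prop : ContDiff ℝ n fun p : (ι → ℝ) × ℝ => (p.1, p.2 * p.1 a)))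
  rw [hscale]
  exact (contDiff_apply ℝ ℝ a).mul (contDiff_intervalIntegral hintegrand 0 1)

lemma partialDeriv_partialPrimitive (hg : ContDiff ℝ 1 g) (x : ι → ℝ) :
    partialDeriv a (partialPrimitive g a) x = g x := by
  have hdiff : DifferentiableAt ℝ (partialPrimitive g a) x :=
    (contDiff_partialPrimitive (n := 1) hg).differentiable one_ne_zero x
  have hchain : HasDerivAt (fun u => partialPrimitive g a (Function.update x a u))
      (partialDeriv a (partialPrimitive g a) x) (x a) :=
    hdiff.hasFDerivAt.comp_hasDerivAt_of_eq (x a) (hasDerivAt_update x a (x a)) (by simp)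
  rw [hchain.unique (hasDerivAt_partialPrimitive_update hg.continuous x (x a)),
    Function.update_eq_self]

end PartialPrimitive

lemma notMem_range_some {α : Type*} {s : κ → Set α} {P : IndexedPartition s} {i : κ} {a : α}
    (ha : a ∈ s i) (hne : a ≠ P.some i) : a ∉ range P.some := by
  rintro ⟨j, rfl⟩
  exact hne (by rw [← P.mem_iff_index_eq.1 ha, P.index_some])

section PivotMap

variable {s : κ → Set ι} (P : IndexedPartition s) (g : κ → (ι → ℝ) → ℝ)

/-- The block map that replaces one pivot coordinate `P.some i` of each block by the primitive of
`g i` along it and fixes all other coordinates, so that its `i`-th block Jacobian determinant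
is `g i`. -/
def pivotMap (x : ι → ℝ) (a : ι) : ℝ :=
  if a = P.some (P.index a) then partialPrimitive (g (P.index a)) a x else x a

variable {P g}

lemma pivotMap_some (x : ι → ℝ) (i : κ) :
    pivotMap P g x (P.some i) = partialPrimitive (g i) (P.some i) x := by
  rw [pivotMap, P.index_some, if_pos rfl]

lemma pivotMap_of_notMem_range {a : ι} (ha : a ∉ range P.some) (x : ι → ℝ) :
    pivotMap P g x a = x a :=
  if_neg fun h => ha ⟨_, h.symm⟩

lemma pivotMap_zero : pivotMap P g 0 = 0 := by
  ext a
  by_cases ha : a ∈ range P.some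
  · obtain ⟨i, rfl⟩ := ha
    rw [pivotMap_some, partialPrimitive_of_apply_eq_zero (Pi.zero_apply _), Pi.zero_apply]
  · rw [pivotMap_of_notMem_range ha]

lemma dependsOn_pivotMap (hg : ∀ i, DependsOn (g i) (s i)) (a : ι) :
    DependsOn (fun x => pivotMap P g x a) (s (P.index a)) := by
  by_cases ha : a ∈ range P.some
  · obtain ⟨i, rfl⟩ := ha
    simpa only [pivotMap_some, P.index_some] using
      dependsOn_partialPrimitive (hg i) (P.some_mem i)
  · intro x y hxy
    simpa only [pivotMap_of_notMem_range ha] using hxy a (P.mem_index a)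

lemma injective_pivotMap (hg : ∀ i, Continuous (g i)) (hpos : ∀ i x, 0 < g i x)
    (hdep : ∀ i, DependsOn (g i) (s i)) : Function.Injective (pivotMap P g) := by
  intro x y hxy
  have heq : ∀ a ∉ range P.some, x a = y a := fun a ha => by
    simpa only [pivotMap_of_notMem_range ha] using congrFun hxy a
  ext a
  by_cases ha : a ∈ range P.some
  · obtain ⟨i, rfl⟩ := ha
    have hblock : ∀ k ∈ s i, y k = Function.update x (P.some i) (y (P.some i)) k := by
      intro k hk
      rcases eq_or_ne k (P.some i) with rfl | hne
      · rw [Function.update_self]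
      · rw [Function.update_of_ne hne, heq k (notMem_range_some hk hne)]
    refine (strictMono_partialPrimitive_update (a := P.some i) (hg i) (hpos i) x).injective ?_
    simpa only [Function.update_eq_self, pivotMap_some,
      dependsOn_partialPrimitive (hdep i) (P.some_mem i) hblock] using congrFun hxy (P.some i)
  · exact heq a ha

lemma fderiv_pivotMap_apply_of_notMem_range {a : ι} (ha : a ∉ range P.some) (x v : ι → ℝ) :
    fderiv ℝ (fun y => pivotMap P g y a) x v = v a := by
  simp only [pivotMap_of_notMem_range ha]
  exact DFunLike.congr_fun (ContinuousLinearMap.proj (R := ℝ) (φ := fun _ : ι => ℝ) a).fderiv v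

variable [Fintype ι]

lemma contDiff_pivotMap {n : ℕ∞} (hg : ∀ i, ContDiff ℝ n (g i)) :
    ContDiff ℝ n (pivotMap P g) := by
  refine contDiff_pi.2 fun a => ?_
  by_cases ha : a ∈ range P.some
  · obtain ⟨i, rfl⟩ := ha
    simpa only [pivotMap_some] using contDiff_partialPrimitive (hg i)
  · simpa only [pivotMap_of_notMem_range ha] using contDiff_apply ℝ ℝ a

lemma partialDeriv_pivotMap_some {i : κ} (hg : ContDiff ℝ 1 (g i)) (x : ι → ℝ) :
    partialDeriv (P.some i) (fun y => pivotMap P g y (P.some i)) x = g i x := by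
  simp only [pivotMap_some]
  exact partialDeriv_partialPrimitive hg x

lemma injective_fderiv_pivotMap (hg : ∀ i, ContDiff ℝ 1 (g i)) (hdep : ∀ i, DependsOn (g i) (s i))
    {x : ι → ℝ} (hne : ∀ i, g i x ≠ 0) : Function.Injective (fderiv ℝ (pivotMap P g) x) := by
  have hdiff : DifferentiableAt ℝ (pivotMap P g) x :=
    (contDiff_pivotMap (n := 1) hg).differentiable one_ne_zero x
  refine (injective_iff_map_eq_zero _).2 fun v hv => ?_
  have hrow : ∀ a, fderiv ℝ (fun y => pivotMap P g y a) x v = 0 := fun a => by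
    rw [fderiv_apply hdiff, ContinuousLinearMap.comp_apply, hv, map_zero]
  have hzero : ∀ a ∉ range P.some, v a = 0 := fun a ha => by
    rw [← hrow a, fderiv_pivotMap_apply_of_notMem_range ha]
  ext a
  by_cases ha : a ∈ range P.some
  · obtain ⟨i, rfl⟩ := ha
    have hsingle : fderiv ℝ (fun y => pivotMap P g y (P.some i)) x
        (v - v (P.some i) • Pi.single (P.some i) 1) = 0 := by
      have hdep' := dependsOn_pivotMap (P := P) hdep (P.some i)
      rw [P.index_some] at hdep'
      refine (dependsOnWithin_univ.2 hdep').fderiv_apply_eq_zero isOpen_univ (mem_univ x)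
        fun k hk => ?_
      rcases eq_or_ne k (P.some i) with rfl | hki
      · simp
      · simp [hki, hzero k (notMem_range_some hk hki)]
    rw [map_sub, map_smul, hrow, ← partialDeriv, partialDeriv_pivotMap_some (hg i)] at hsingle
    simpa [hne i] using hsingle
  · exact hzero a ha

lemma exists_fderiv_pivotMap_eq_equiv (hg : ∀ i, ContDiff ℝ 1 (g i))
    (hdep : ∀ i, DependsOn (g i) (s i)) {x : ι → ℝ} (hne : ∀ i, g i x ≠ 0) :
    ∃ L : (ι → ℝ) ≃L[ℝ] (ι → ℝ), fderiv ℝ (pivotMap P g) x = L :=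
  ⟨(LinearEquiv.ofInjectiveEndo (fderiv ℝ (pivotMap P g) x).toLinearMap
    (injective_fderiv_pivotMap hg hdep hne)).toContinuousLinearEquiv, rfl⟩

end PivotMap

lemma det_eq_apply_self_of_rows_eq_one {α R : Type*} [Fintype α] [DecidableEq α] [CommRing R]
    {M : Matrix α α R} {p : α} (hM : ∀ a ≠ p, M a = (1 : Matrix α α R) a) : M.det = M p p := by
  have hupdate : (1 : Matrix α α R).updateRow p (M p) = M := by
    ext a k
    rcases eq_or_ne a p with rfl | ha
    · rw [Matrix.updateRow_self]
    · rw [Matrix.updateRow_ne ha, hM a ha]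
  calc M.det = ((1 : Matrix α α R).updateRow p (M p)).det := by rw [hupdate]
    _ = M p p := by rw [← Matrix.cramer_transpose_apply]; simp

lemma blockDet_pivotMap {m n : ℕ} {B : Fin n → Finset (Fin m)}
    {P : IndexedPartition fun i => (B i : Set (Fin m))} {g : Fin n → (Fin m → ℝ) → ℝ} {i : Fin n}
    (hg : ContDiff ℝ 1 (g i)) (x : Fin m → ℝ) : blockDet B (pivotMap P g) i x = g i x := by
  rw [blockDet, det_eq_apply_self_of_rows_eq_one (p := ⟨P.some i, P.some_mem i⟩)]
  · exact partialDeriv_pivotMap_some hg x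
  · intro a ha
    ext k
    have ha' : a.1 ∉ range P.some := notMem_range_some a.2 fun h => ha (Subtype.ext h)
    rw [Matrix.of_apply, fderiv_pivotMap_apply_of_notMem_range ha', Matrix.one_apply,
      Pi.single_apply]
    simp only [Subtype.ext_iff]

/-- A divergence-free `n`-web volume density `h` near `0 ∈ ℝ^m` is
equivalent to the standard one via a block-product diffeomorphism iff all the mixed
partial derivatives of `log h` across different blocks vanish near `0`. -/
theorem stmt0 {m n : ℕ} (hm : 2 ≤ m) (hn : 2 ≤ n)
    (B : Fin n → Finset (Fin m))
    (hBne : ∀ i, (B i).Nonempty)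
    (hBdisj : ∀ i j, i ≠ j → Disjoint (B i) (B j))
    (hBcover : ∀ k, ∃ i, k ∈ B i)
    (h : (Fin m → ℝ) → ℝ) (V : Set (Fin m → ℝ))
    (hV : IsOpen V) (h0V : (0 : Fin m → ℝ) ∈ V)
    (hsm : ContDiffOn ℝ (⊤ : ℕ∞) h V) (hpos : ∀ x ∈ V, 0 < h x) :
    (∃ (U : Set (Fin m → ℝ)) (φ : (Fin m → ℝ) → (Fin m → ℝ)),
        IsOpen U ∧ (0 : Fin m → ℝ) ∈ U ∧ U ⊆ V ∧ φ 0 = 0 ∧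
        ContDiffOn ℝ (⊤ : ℕ∞) φ U ∧ Set.InjOn φ U ∧
        (∀ x ∈ U, ∃ L : (Fin m → ℝ) ≃L[ℝ] (Fin m → ℝ),
          fderiv ℝ φ x = (L : (Fin m → ℝ) →L[ℝ] (Fin m → ℝ))) ∧
        (∀ i : Fin n, ∀ a ∈ B i, ∀ x ∈ U, ∀ y ∈ U,
          (∀ k ∈ B i, x k = y k) → φ x a = φ y a) ∧
        (∀ x ∈ U, h x = |∏ i, blockDet B φ i x|)) ↔
    (∃ W : Set (Fin m → ℝ), IsOpen W ∧ (0 : Fin m → ℝ) ∈ W ∧ W ⊆ V ∧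
      ∀ k l : Fin m, (¬ ∃ i, k ∈ B i ∧ l ∈ B i) →
        ∀ x ∈ W, logpd2 h k l x = 0) := by
  constructor
  · rintro ⟨U, φ, hU, h0U, hUV, -, hφ, -, -, hb, hdet⟩
    exact ⟨U, hU, h0U, hUV, fun k l hkl x hx => logpd2_eq_zero_of_eq_abs_prod hU
      (fun i => contDiffOn_blockDet hU hφ (WithTop.coe_le_coe.2 (le_top : (3 : ℕ∞) ≤ ⊤)))
      (fun i => dependsOnWithin_blockDet hU (hb i)) (fun y hy => hpos y (hUV hy)) hdet hkl hx⟩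
  · rintro ⟨W, hW, h0W, hWV, hmixed⟩
    let P : IndexedPartition fun i => (B i : Set (Fin m)) := .mk' _
      (fun i j hij => Finset.disjoint_coe.2 (hBdisj i j hij)) hBne hBcover
    have : Nonempty (Fin n) := ⟨⟨0, by omega⟩⟩
    obtain ⟨g, hg, hgpos, hgdep, hprod⟩ := exists_prod_factorization P hW h0W (hsm.mono hWV)
      (fun x hx => hpos x (hWV hx)) fun k l hkl => hmixed k l fun ⟨i, hk, hl⟩ =>
        hkl ((P.mem_iff_index_eq.1 hk).trans (P.mem_iff_index_eq.1 hl).symm)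
    have hg1 : ∀ i, ContDiff ℝ 1 (g i) := fun i => (hg i).of_le (mod_cast le_top)
    obtain ⟨U, hUsub, hU, h0U⟩ := eventually_nhds_iff.1 (hprod.and (hV.mem_nhds h0V))
    refine ⟨U, pivotMap P g, hU, h0U, fun x hx => (hUsub x hx).2, pivotMap_zero,
      (contDiff_pivotMap hg).contDiffOn,
      (injective_pivotMap (fun i => (hg i).continuous) hgpos hgdep).injOn,
      fun x _ => exists_fderiv_pivotMap_eq_equiv hg1 hgdep fun i => (hgpos i x).ne',
      fun i a ha x _ y _ hxy => ?_, fun x hx => ?_⟩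
    · exact dependsOn_pivotMap hgdep a (P.mem_iff_index_eq.1 ha ▸ hxy)
    · simp only [blockDet_pivotMap (hg1 _)]
      rw [(hUsub x hx).1, abs_of_pos (Finset.prod_pos fun i _ => hgpos i x)]
end
end

section
/- Let m ≥ 2 and let B_1,…,B_n (n ≥ 2) be a partition of {1,…,m} into nonempty blocks; write k ≁ l if k,l lie in different blocks. Let h be a smooth positive function on a neighborhood of 0 in ℝ^m. Then ∂²(log h)/∂x_k∂x_l vanishes on a neighborhood of 0 for all pairs k ≁ l if and only if there exist smooth positive functions g_1,…,g_n, where g_i is defined on a neighborhood of 0 in ℝ^{|B_i|}, such that h(x) = ∏_{i=1}^n g_i(x_{B_i}) for all x in a neighborhood of 0. -/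
open MeasureTheory

noncomputable section

/- Put `f = log h`. If `f` is a sum of functions of the separate blocks, each summand is killed by
one of the two derivatives in a mixed Hessian entry. Conversely, write `x = ∑ i, P i x` with
`P i` the coordinate projection onto the `i`-th block. Where the mixed Hessian of `f` vanishes, the
derivative of `f` in a direction of the `i`-th block depends on the `i`-th block variable alone, so
`df_z (P i x) = df_{P i z} (P i x)`. Hence `f` and `∑ i, f ∘ P i` have the same derivative and
differ by a constant; exponentiating gives the factorization. -/

open Set Metric Topology

section SecondDerivative

variable {𝕜 E G : Type*} [NontriviallyNormedField 𝕜] [NormedAddCommGroup E] [NormedSpace 𝕜 E]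
  [NormedAddCommGroup G] [NormedSpace 𝕜 G]

lemma differentiableAt_fderiv_of_contDiffAt_two {f : E → G} {x : E} (hf : ContDiffAt 𝕜 2 f x) :
    DifferentiableAt 𝕜 (fderiv 𝕜 f) x :=
  (hf.fderiv_right (m := 1) one_add_one_eq_two.le).differentiableAt one_ne_zero

lemma hasFDerivAt_fderiv_apply_const {f : E → G} {x : E} (hf : ContDiffAt 𝕜 2 f x) (u : E) :
    HasFDerivAt (fun y => fderiv 𝕜 f y u) ((fderiv 𝕜 (fderiv 𝕜 f) x).flip u) x := by
  simpa using
    (differentiableAt_fderiv_of_contDiffAt_two hf).hasFDerivAt.clm_apply (hasFDerivAt_const u x)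

lemma hasFDerivAt_fderiv_comp_apply_const {F : Type*} [NormedAddCommGroup F] [NormedSpace 𝕜 F]
    {φ : F → G} (R : E →L[𝕜] F) {x : E} (hφ : ContDiffAt 𝕜 2 φ (R x)) (u : E) :
    HasFDerivAt (fun y => fderiv 𝕜 φ (R y) (R u))
      (((fderiv 𝕜 (fderiv 𝕜 φ) (R x)).flip (R u)).comp R) x :=
  (hasFDerivAt_fderiv_apply_const hφ (R u)).comp x R.hasFDerivAt

variable {κ : Type*} [Fintype κ] {F : κ → Type*} [∀ i, NormedAddCommGroup (F i)]
  [∀ i, NormedSpace 𝕜 (F i)]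

theorem fderiv_fderiv_eq_sum_of_eventuallyEq_sum_comp {f : E → G} {φ : ∀ i, F i → G}
    {R : ∀ i, E →L[𝕜] F i} {x : E} (hφ : ∀ i, ContDiffAt 𝕜 2 (φ i) (R i x))
    (hf : f =ᶠ[𝓝 x] fun y => ∑ i, φ i (R i y)) (u v : E) :
    fderiv 𝕜 (fun y => fderiv 𝕜 f y u) x v =
      ∑ i, fderiv 𝕜 (fderiv 𝕜 (φ i)) (R i x) (R i v) (R i u) := by
  have hφ_near : ∀ᶠ y in 𝓝 x, ∀ i, ContDiffAt 𝕜 2 (φ i) (R i y) :=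
    Filter.eventually_all.2 fun i =>
      (R i).continuous.continuousAt.eventually ((hφ i).eventually (by simp))
  have hfirst : (fun y => fderiv 𝕜 f y u) =ᶠ[𝓝 x]
      fun y => ∑ i, fderiv 𝕜 (φ i) (R i y) (R i u) := by
    filter_upwards [hf.eventuallyEq_nhds, hφ_near] with y hfy hφy
    have hsum : HasFDerivAt (fun y => ∑ i, φ i (R i y))
        (∑ i, (fderiv 𝕜 (φ i) (R i y)).comp (R i)) y :=
      HasFDerivAt.fun_sum fun i _ =>
        ((hφy i).differentiableAt two_ne_zero).hasFDerivAt.comp y (R i).hasFDerivAt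
    simp [hfy.fderiv_eq, hsum.fderiv]
  have hsecond := HasFDerivAt.fun_sum (u := Finset.univ) fun i _ =>
    hasFDerivAt_fderiv_comp_apply_const (R i) (hφ i) u
  simp [hfirst.fderiv_eq, hsecond.fderiv]

end SecondDerivative

section BlockDecomposition

variable {E : Type*} [NormedAddCommGroup E] [NormedSpace ℝ E] {s : Set E} {f : E → ℝ}

lemma eq_of_fderiv_apply_sub_eq_zero (hs : Convex ℝ s) (hf : ∀ z ∈ s, DifferentiableAt ℝ f z)
    {x y : E} (hx : x ∈ s) (hy : y ∈ s) (hzero : ∀ z ∈ s, fderiv ℝ f z (y - x) = 0) :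
    f x = f y := by
  obtain ⟨z, hz, hmean⟩ :=
    domain_mvt (fun z hz => (hf z hz).hasFDerivAt.hasFDerivWithinAt) hs hx hy
  rw [hzero z (hs.segment_subset hx hy hz)] at hmean
  exact (sub_eq_zero.1 hmean).symm

variable {κ : Type*} [Fintype κ] {P : κ → E →L[ℝ] E}

lemma fderiv_apply_eq_fderiv_apply_proj (hP : ∀ x, ∑ i, P i x = x) (hs : Convex ℝ s)
    (hPs : ∀ i, MapsTo (P i) s s) (hf : ∀ z ∈ s, ContDiffAt ℝ 2 f z)
    (hmixed : ∀ z ∈ s, ∀ i j, i ≠ j → ∀ u v, fderiv ℝ (fderiv ℝ f) z (P i u) (P j v) = 0)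
    {z : E} (hz : z ∈ s) (i : κ) (v : E) :
    fderiv ℝ f z (P i v) = fderiv ℝ f (P i z) (P i v) := by
  classical
  have hcompl : z - P i z = ∑ j ∈ Finset.univ.erase i, P j z := by
    rw [Finset.sum_erase_eq_sub (Finset.mem_univ i), hP]
  refine (eq_of_fderiv_apply_sub_eq_zero (f := fun w => fderiv ℝ f w (P i v)) hs
    (fun w hw => (hasFDerivAt_fderiv_apply_const (hf w hw) _).differentiableAt)
    (hPs i hz) hz fun w hw => ?_).symm
  rw [(hasFDerivAt_fderiv_apply_const (hf w hw) _).fderiv, hcompl, map_sum]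
  exact Finset.sum_eq_zero fun j hj => hmixed w hw j i (Finset.ne_of_mem_erase hj) z v

theorem sub_eq_sum_sub_of_mixed_fderiv_fderiv_eq_zero (hP : ∀ x, ∑ i, P i x = x)
    (hs : Convex ℝ s) (h0 : (0 : E) ∈ s) (hPs : ∀ i, MapsTo (P i) s s)
    (hf : ∀ z ∈ s, ContDiffAt ℝ 2 f z)
    (hmixed : ∀ z ∈ s, ∀ i j, i ≠ j → ∀ u v, fderiv ℝ (fderiv ℝ f) z (P i u) (P j v) = 0)
    {x : E} (hx : x ∈ s) :
    f x - f 0 = ∑ i, (f (P i x) - f 0) := by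
  have hdiff : ∀ z ∈ s, HasFDerivAt f (fderiv ℝ f z) z := fun z hz =>
    ((hf z hz).differentiableAt two_ne_zero).hasFDerivAt
  have hdefect : ∀ z ∈ s, HasFDerivAt (fun w => f w - ∑ i, f (P i w))
      (fderiv ℝ f z - ∑ i, (fderiv ℝ f (P i z)).comp (P i)) z := fun z hz =>
    (hdiff z hz).sub <| HasFDerivAt.fun_sum fun i _ =>
      (hdiff _ (hPs i hz)).comp z (P i).hasFDerivAt
  have hconst : f 0 - ∑ i, f (P i 0) = f x - ∑ i, f (P i x) := by
    refine eq_of_fderiv_apply_sub_eq_zero hs (fun z hz => (hdefect z hz).differentiableAt) h0 hx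
      fun z hz => ?_
    have hsplit : fderiv ℝ f z x = ∑ i, fderiv ℝ f (P i z) (P i x) :=
      calc fderiv ℝ f z x = ∑ i, fderiv ℝ f z (P i x) := by rw [← map_sum, hP]
        _ = ∑ i, fderiv ℝ f (P i z) (P i x) := Finset.sum_congr rfl fun i _ =>
          fderiv_apply_eq_fderiv_apply_proj hP hs hPs hf hmixed hz i x
    simp [(hdefect z hz).fderiv, hsplit]
  simp only [map_zero] at hconst
  rw [Finset.sum_sub_distrib]
  linarith

end BlockDecomposition

section Coordinates

variable {ι : Type*}

/-- Restriction `x ↦ x_S` to the coordinates in `S`, as a continuous linear map. -/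
def restrictCLM (S : Finset ι) : (ι → ℝ) →L[ℝ] (S → ℝ) :=
  ContinuousLinearMap.pi fun k => ContinuousLinearMap.proj k.1

lemma norm_restrictCLM_apply_le [Fintype ι] (S : Finset ι) (x : ι → ℝ) : ‖restrictCLM S x‖ ≤ ‖x‖ :=
  (pi_norm_le_iff_of_nonneg (norm_nonneg x)).2 fun k => norm_le_pi_norm x k.1

lemma restrictCLM_mem_ball [Fintype ι] (S : Finset ι) {ρ : ℝ} {x : ι → ℝ}
    (hx : x ∈ ball 0 ρ) : restrictCLM S x ∈ ball 0 ρ :=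
  mem_ball_zero_iff.2 ((norm_restrictCLM_apply_le S x).trans_lt (mem_ball_zero_iff.1 hx))

variable [DecidableEq ι]

lemma restrictCLM_single_of_notMem {S : Finset ι} {k : ι} (hk : k ∉ S) (a : ℝ) :
    restrictCLM S (Pi.single k a) = 0 :=
  funext fun j => Pi.single_eq_of_ne (M := fun _ => ℝ) (ne_of_mem_of_not_mem j.2 hk) a

lemma apply_apply_eq_zero_of_apply_single_single [Finite ι] {G : Type*} [NormedAddCommGroup G]
    [NormedSpace ℝ G] (L : (ι → ℝ) →L[ℝ] (ι → ℝ) →L[ℝ] G) {u v : ι → ℝ}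
    (hL : ∀ k l, u k ≠ 0 → v l ≠ 0 → L (Pi.single k 1) (Pi.single l 1) = 0) : L u v = 0 := by
  cases nonempty_fintype ι
  have hexpand : L u v = ∑ k, ∑ l, u k • v l • L (Pi.single k 1) (Pi.single l 1) := by
    conv_lhs => rw [pi_eq_sum_univ' u, pi_eq_sum_univ' v]
    simp only [map_sum, map_smul, sum_apply, smul_apply, Finset.smul_sum]
    rw [Finset.sum_comm]
    simp only [smul_comm (v _)]
  rw [hexpand]
  refine Finset.sum_eq_zero fun k _ => Finset.sum_eq_zero fun l _ => ?_
  by_cases hk : u k = 0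
  · simp [hk]
  by_cases hl : v l = 0
  · simp [hl]
  · simp [hL k l hk hl]

/-- Extension of a function on the block `S` by zero, as a continuous linear map; it turns a
function of all coordinates into a function of the block variable `x_S`. -/
def extendByZeroCLM (S : Finset ι) : (S → ℝ) →L[ℝ] (ι → ℝ) :=
  ContinuousLinearMap.pi fun k => if hk : k ∈ S then ContinuousLinearMap.proj ⟨k, hk⟩ else 0

lemma extendByZeroCLM_apply (S : Finset ι) (y : S → ℝ) (k : ι) :
    extendByZeroCLM S y k = if hk : k ∈ S then y ⟨k, hk⟩ else 0 := by
  by_cases hk : k ∈ S <;> simp [extendByZeroCLM, hk]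

lemma extendByZeroCLM_restrictCLM_apply (S : Finset ι) (x : ι → ℝ) (k : ι) :
    extendByZeroCLM S (restrictCLM S x) k = if k ∈ S then x k else 0 := by
  rw [extendByZeroCLM_apply]
  rfl

variable [Fintype ι]

lemma norm_extendByZeroCLM_apply_le (S : Finset ι) (y : S → ℝ) : ‖extendByZeroCLM S y‖ ≤ ‖y‖ := by
  refine (pi_norm_le_iff_of_nonneg (norm_nonneg y)).2 fun k => ?_
  rw [extendByZeroCLM_apply]
  split_ifs with hk
  · exact norm_le_pi_norm y ⟨k, hk⟩
  · simp

lemma extendByZeroCLM_mem_ball (S : Finset ι) {ρ : ℝ} {y : S → ℝ} (hy : y ∈ ball 0 ρ) :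
    extendByZeroCLM S y ∈ ball 0 ρ :=
  mem_ball_zero_iff.2 ((norm_extendByZeroCLM_apply_le S y).trans_lt (mem_ball_zero_iff.1 hy))

end Coordinates

section BlockFactor

variable {ι : Type*} [DecidableEq ι]

/-- The factor `h(y) / h(0)^(1 - 1/n)` of a positive function `h` on a block `S`, where `n` is the
number of blocks and `y` is extended by zero. The constant is spread evenly so that all
factors have the same form. -/
def blockFactor (n : ℕ) (h : (ι → ℝ) → ℝ) (S : Finset ι) (y : S → ℝ) : ℝ :=
  Real.exp (Real.log (h (extendByZeroCLM S y)) - Real.log (h 0) + Real.log (h 0) / n)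

lemma blockFactor_pos (n : ℕ) (h : (ι → ℝ) → ℝ) (S : Finset ι) (y : S → ℝ) :
    0 < blockFactor n h S y :=
  Real.exp_pos _

lemma contDiffOn_blockFactor [Fintype ι] (n : ℕ) {h : (ι → ℝ) → ℝ} (S : Finset ι)
    {r : WithTop ℕ∞} {ρ : ℝ} (hh : ContDiffOn ℝ r h (ball 0 ρ))
    (hpos : ∀ x ∈ ball 0 ρ, 0 < h x) :
    ContDiffOn ℝ r (blockFactor n h S) (ball 0 ρ) := by
  have hlog : ContDiffOn ℝ r (fun x => Real.log (h x)) (ball 0 ρ) :=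
    hh.log fun x hx => (hpos x hx).ne'
  exact (((hlog.comp (extendByZeroCLM S).contDiff.contDiffOn
    fun _ hy => extendByZeroCLM_mem_ball S hy).sub contDiffOn_const).add contDiffOn_const).exp

end BlockFactor

section Partition

variable {ι κ : Type*} {B : κ → Finset ι}

lemma notMem_same_block (hBdisj : Pairwise fun i j => Disjoint (B i) (B j)) {i j : κ}
    (hij : i ≠ j) {k l : ι} (hk : k ∈ B i) (hl : l ∈ B j) : ¬ ∃ b, k ∈ B b ∧ l ∈ B b := by
  rintro ⟨b, hkb, hlb⟩
  have hbi : b = i := hBdisj.eq (Finset.not_disjoint_iff.2 ⟨k, hkb, hk⟩)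
  have hbj : b = j := hBdisj.eq (Finset.not_disjoint_iff.2 ⟨l, hlb, hl⟩)
  exact hij (hbi.symm.trans hbj)

variable [DecidableEq ι] [Fintype κ]

lemma sum_extendByZeroCLM_restrictCLM (hBdisj : Pairwise fun i j => Disjoint (B i) (B j))
    (hBcover : ∀ k, ∃ i, k ∈ B i) (x : ι → ℝ) :
    ∑ i, extendByZeroCLM (B i) (restrictCLM (B i) x) = x := by
  ext k
  obtain ⟨i, hi⟩ := hBcover k
  simp only [Finset.sum_apply, extendByZeroCLM_restrictCLM_apply]
  rw [Fintype.sum_eq_single i, if_pos hi]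
  exact fun j hj => if_neg (Finset.disjoint_right.1 (hBdisj hj) hi)

theorem mixed_log_partials_eq_zero_of_eq_prod [Finite ι] {h : (ι → ℝ) → ℝ} {g : ∀ i, (B i → ℝ) → ℝ}
    {U : Set (ι → ℝ)} (hU : IsOpen U)
    (hg : ∀ x ∈ U, ∀ i, ContDiffAt ℝ 2 (g i) (restrictCLM (B i) x))
    (hgpos : ∀ x ∈ U, ∀ i, 0 < g i (restrictCLM (B i) x))
    (hprod : ∀ x ∈ U, h x = ∏ i, g i (restrictCLM (B i) x))
    {k l : ι} (hkl : ¬ ∃ i, k ∈ B i ∧ l ∈ B i) {x : ι → ℝ} (hx : x ∈ U) :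
    fderiv ℝ (fun y => fderiv ℝ (fun z => Real.log (h z)) y (Pi.single k 1)) x
      (Pi.single l 1) = 0 := by
  cases nonempty_fintype ι
  have hlog : (fun z => Real.log (h z)) =ᶠ[𝓝 x]
      fun z => ∑ i, Real.log (g i (restrictCLM (B i) z)) := by
    filter_upwards [hU.mem_nhds hx] with z hz
    rw [hprod z hz, Real.log_prod fun i _ => (hgpos z hz i).ne']
  rw [fderiv_fderiv_eq_sum_of_eventuallyEq_sum_comp (φ := fun i y => Real.log (g i y))
    (R := fun i => restrictCLM (B i)) (fun i => (hg x hx i).log (hgpos x hx i).ne') hlog]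
  refine Finset.sum_eq_zero fun i _ => ?_
  by_cases hk : k ∈ B i
  · have hl : l ∉ B i := fun hl => hkl ⟨i, hk, hl⟩
    simp [restrictCLM_single_of_notMem hl]
  · simp [restrictCLM_single_of_notMem hk]

variable [Fintype ι]

theorem sub_eq_sum_sub_of_mixed_partials_eq_zero
    (hBdisj : Pairwise fun i j => Disjoint (B i) (B j)) (hBcover : ∀ k, ∃ i, k ∈ B i)
    {f : (ι → ℝ) → ℝ} {ρ : ℝ} (hρ : 0 < ρ) (hf : ∀ z ∈ ball 0 ρ, ContDiffAt ℝ 2 f z)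
    (hmixed : ∀ k l, (¬ ∃ i, k ∈ B i ∧ l ∈ B i) → ∀ z ∈ ball 0 ρ,
      fderiv ℝ (fun y => fderiv ℝ f y (Pi.single k 1)) z (Pi.single l 1) = 0)
    {x : ι → ℝ} (hx : x ∈ ball 0 ρ) :
    f x - f 0 = ∑ i, (f (extendByZeroCLM (B i) (restrictCLM (B i) x)) - f 0) := by
  refine sub_eq_sum_sub_of_mixed_fderiv_fderiv_eq_zero
    (P := fun i => (extendByZeroCLM (B i)).comp (restrictCLM (B i)))
    (sum_extendByZeroCLM_restrictCLM hBdisj hBcover) (convex_ball 0 ρ) (mem_ball_self hρ)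
    (fun i z hz => extendByZeroCLM_mem_ball _ (restrictCLM_mem_ball _ hz)) hf
    (fun z hz i j hij u v => apply_apply_eq_zero_of_apply_single_single _ fun l k hl hk => ?_) hx
  have hli : l ∈ B i := by
    by_contra hl'
    exact hl (by simp [extendByZeroCLM_restrictCLM_apply, hl'])
  have hkj : k ∈ B j := by
    by_contra hk'
    exact hk (by simp [extendByZeroCLM_restrictCLM_apply, hk'])
  simpa [(hasFDerivAt_fderiv_apply_const (hf z hz) _).fderiv] using
    hmixed k l (notMem_same_block hBdisj hij.symm hkj hli) z hz

theorem eq_prod_blockFactor_of_mixed_log_partials_eq_zero [Nonempty κ]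
    (hBdisj : Pairwise fun i j => Disjoint (B i) (B j)) (hBcover : ∀ k, ∃ i, k ∈ B i)
    {h : (ι → ℝ) → ℝ} {ρ : ℝ} (hρ : 0 < ρ) (hh : ContDiffOn ℝ 2 h (ball 0 ρ))
    (hpos : ∀ x ∈ ball 0 ρ, 0 < h x)
    (hmixed : ∀ k l, (¬ ∃ i, k ∈ B i ∧ l ∈ B i) → ∀ x ∈ ball 0 ρ,
      fderiv ℝ (fun y => fderiv ℝ (fun z => Real.log (h z)) y (Pi.single k 1)) x
        (Pi.single l 1) = 0)
    {x : ι → ℝ} (hx : x ∈ ball 0 ρ) :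
    h x = ∏ i, blockFactor (Fintype.card κ) h (B i) (restrictCLM (B i) x) := by
  have hadd := sub_eq_sum_sub_of_mixed_partials_eq_zero hBdisj hBcover hρ
    (fun z hz => (hh.contDiffAt (isOpen_ball.mem_nhds hz)).log (hpos z hz).ne') hmixed hx
  have hcard : (Fintype.card κ : ℝ) ≠ 0 := Nat.cast_ne_zero.2 Fintype.card_ne_zero
  have hconst : ∑ _i : κ, Real.log (h 0) / Fintype.card κ = Real.log (h 0) := by
    rw [Finset.sum_const, Finset.card_univ, nsmul_eq_mul, mul_div_cancel₀ _ hcard]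
  simp only [blockFactor]
  rw [← Real.exp_sum, Finset.sum_add_distrib, ← hadd, hconst, sub_add_cancel,
    Real.exp_log (hpos x hx)]

theorem stmt1_general [Nonempty κ] (hBdisj : Pairwise fun i j => Disjoint (B i) (B j))
    (hBcover : ∀ k, ∃ i, k ∈ B i) {r : WithTop ℕ∞} (hr : 2 ≤ r)
    {h : (ι → ℝ) → ℝ} {V : Set (ι → ℝ)} (hsm : ContDiffOn ℝ r h V) (hpos : ∀ x ∈ V, 0 < h x) :
    (∃ W : Set (ι → ℝ), IsOpen W ∧ 0 ∈ W ∧ W ⊆ V ∧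
      ∀ k l, (¬ ∃ i, k ∈ B i ∧ l ∈ B i) → ∀ x ∈ W,
        fderiv ℝ (fun y => fderiv ℝ (fun z => Real.log (h z)) y (Pi.single k 1)) x
          (Pi.single l 1) = 0) ↔
    ∃ (U : Set (ι → ℝ)) (g : ∀ i, (B i → ℝ) → ℝ) (W : ∀ i, Set (B i → ℝ)),
      IsOpen U ∧ 0 ∈ U ∧ U ⊆ V ∧
      (∀ i, IsOpen (W i) ∧ 0 ∈ W i ∧ ContDiffOn ℝ r (g i) (W i) ∧ ∀ y ∈ W i, 0 < g i y) ∧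
      (∀ x ∈ U, ∀ i, (B i).restrict x ∈ W i) ∧
      ∀ x ∈ U, h x = ∏ i, g i ((B i).restrict x) := by
  constructor
  · rintro ⟨W, hW, h0W, hWV, hmixed⟩
    obtain ⟨ρ, hρ, hρW⟩ := isOpen_iff.1 hW 0 h0W
    have hsmρ : ContDiffOn ℝ r h (ball 0 ρ) := hsm.mono (hρW.trans hWV)
    have hposρ : ∀ x ∈ ball 0 ρ, 0 < h x := fun x hx => hpos x (hWV (hρW hx))
    exact ⟨ball 0 ρ, fun i => blockFactor (Fintype.card κ) h (B i), fun i => ball 0 ρ,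
      isOpen_ball, mem_ball_self hρ, hρW.trans hWV,
      fun i => ⟨isOpen_ball, mem_ball_self hρ, contDiffOn_blockFactor _ _ hsmρ hposρ,
        fun y _ => blockFactor_pos _ h _ y⟩,
      fun x hx i => restrictCLM_mem_ball (B i) hx,
      fun x hx => eq_prod_blockFactor_of_mixed_log_partials_eq_zero hBdisj hBcover hρ
        (hsmρ.of_le hr) hposρ (fun k l hkl x hx => hmixed k l hkl x (hρW hx)) hx⟩
  · rintro ⟨U, g, W, hU, h0U, hUV, hg, hUW, hprod⟩
    refine ⟨U, hU, h0U, hUV, fun k l hkl x hx => mixed_log_partials_eq_zero_of_eq_prod hU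
      (fun z hz i => ?_) (fun z hz i => ?_) hprod hkl hx⟩ <;>
    obtain ⟨hWi, -, hgi, hgpos⟩ := hg i
    · exact (hgi.contDiffAt (hWi.mem_nhds (hUW z hz i))).of_le hr
    · exact hgpos _ (hUW z hz i)

end Partition

/-- The mixed partial derivatives of `log h` across different blocks
vanish near `0` iff `h` factorizes near `0` as a product of smooth positive functions
of the separate block variables. -/
theorem stmt1 {m n : ℕ} (hm : 2 ≤ m) (hn : 2 ≤ n)
    (B : Fin n → Finset (Fin m))
    (hBne : ∀ i, (B i).Nonempty)
    (hBdisj : ∀ i j, i ≠ j → Disjoint (B i) (B j))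
    (hBcover : ∀ k, ∃ i, k ∈ B i)
    (h : (Fin m → ℝ) → ℝ) (V : Set (Fin m → ℝ))
    (hV : IsOpen V) (h0V : (0 : Fin m → ℝ) ∈ V)
    (hsm : ContDiffOn ℝ (⊤ : ℕ∞) h V) (hpos : ∀ x ∈ V, 0 < h x) :
    (∃ W : Set (Fin m → ℝ), IsOpen W ∧ (0 : Fin m → ℝ) ∈ W ∧ W ⊆ V ∧
      ∀ k l : Fin m, (¬ ∃ i, k ∈ B i ∧ l ∈ B i) →
        ∀ x ∈ W, logpd2 h k l x = 0) ↔
    (∃ (U : Set (Fin m → ℝ)) (g : ∀ i : Fin n, (↥(B i) → ℝ) → ℝ)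
        (W : ∀ i : Fin n, Set (↥(B i) → ℝ)),
      IsOpen U ∧ (0 : Fin m → ℝ) ∈ U ∧ U ⊆ V ∧
      (∀ i, IsOpen (W i) ∧ (0 : ↥(B i) → ℝ) ∈ W i ∧
        ContDiffOn ℝ (⊤ : ℕ∞) (g i) (W i) ∧ ∀ y ∈ W i, 0 < g i y) ∧
      (∀ x ∈ U, ∀ i, (fun k : ↥(B i) => x k.1) ∈ W i) ∧
      (∀ x ∈ U, h x = ∏ i, g i (fun k : ↥(B i) => x k.1))) := by
  have : Nonempty (Fin n) := ⟨⟨0, by omega⟩⟩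
  exact stmt1_general (fun i j => hBdisj i j) hBcover (WithTop.coe_le_coe.2 le_top) hsm hpos
end
end

section
/- Let m ≥ 2, let B_1,…,B_n (n ≥ 2) be a partition of {1,…,m} into nonempty blocks (write k ∼ l if k,l are in the same block, k ≁ l otherwise), let U ⊆ ℝ^m be open, and let h : U → ℝ be smooth and positive. Suppose Γ^k_{ij} : U → ℝ (1 ≤ i,j,k ≤ m) are smooth functions satisfying: (i) Γ^k_{ij} = Γ^k_{ji} for all i,j,k (torsion-freeness); (ii) Γ^k_{ij} = 0 unless i ∼ j ∼ k (the block foliations are parallel); (iii) Σ_{k=1}^m Γ^k_{ik} = ∂(log h)/∂x_i on U for every i (the volume form h·dx_1∧…∧dx_m is parallel). Define the Ricci tensor by Rc_{ij} = Σ_k [ ∂_i Γ^k_{kj} − ∂_k Γ^k_{ij} + Σ_l ( Γ^k_{il} Γ^l_{kj} − Γ^k_{kl} Γ^l_{ij} ) ]. Then for every pair of indices k ≁ l, Rc_{kl} = ∂²(log h)/∂x_k∂x_l on U; in particular these components of Rc do not depend on the choice of the Christoffel symbols Γ satisfying (i)–(iii). -/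
open MeasureTheory

noncomputable section

/-- Partial derivative `∂f/∂x_i` at `x`. -/
def pd {m : ℕ} (f : (Fin m → ℝ) → ℝ) (i : Fin m) (x : Fin m → ℝ) : ℝ :=
  fderiv ℝ f x (Pi.single i (1:ℝ))

/-- Ricci tensor `Rc_{ij} = Σ_k [ ∂_i Γ^k_{kj} − ∂_k Γ^k_{ij}
    + Σ_l ( Γ^k_{il} Γ^l_{kj} − Γ^k_{kl} Γ^l_{ij} ) ]`, where `Γ k i j = Γ^k_{ij}`. -/
def ricci {m : ℕ} (Γ : Fin m → Fin m → Fin m → (Fin m → ℝ) → ℝ)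
    (i j : Fin m) (x : Fin m → ℝ) : ℝ :=
  ∑ k, (pd (Γ k k j) i x - pd (Γ k i j) k x
    + ∑ l, (Γ k i l x * Γ l k j x - Γ k k l x * Γ l i j x))

/-!
Write the volume density as `exp φ` and `i ∼ j` for indices in a common block. If `i ≁ j`, then
`Γ^k_{ij}` vanishes identically, and so does `Γ^k_{il} Γ^l_{kj}`: were both factors nonzero, there
would be a chain `i ∼ l ∼ k ∼ j`. Only `∂_i (∑_k Γ^k_{kj})` survives in `Rc_{ij}`. As the connection
is torsion-free and preserves the volume form, the trace `∑_k Γ^k_{kj}` is `∂_j φ`. Hence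
`Rc_{ij} = ∂_i ∂_j φ`, and the partial derivatives commute because each `∂_j φ` is differentiable,
being a trace of `Γ`.
-/

section PartialDerivatives

open scoped Topology

theorem differentiableAt_clm_pi_iff {𝕜 ι E F : Type*} [NontriviallyNormedField 𝕜]
    [CompleteSpace 𝕜] [Finite ι] [DecidableEq ι] [NormedAddCommGroup E] [NormedSpace 𝕜 E]
    [NormedAddCommGroup F] [NormedSpace 𝕜 F] {f : E → (ι → 𝕜) →L[𝕜] F} {x : E} :
    DifferentiableAt 𝕜 f x ↔ ∀ i, DifferentiableAt 𝕜 (fun y => f y (Pi.single i 1)) x := by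
  have := Fintype.ofFinite ι
  exact (ContinuousLinearEquiv.piRing (𝕜 := 𝕜) (E := F) ι).comp_differentiableAt_iff.symm.trans
    differentiableAt_pi

variable {m : ℕ} {f g : (Fin m → ℝ) → ℝ} {U : Set (Fin m → ℝ)} {x : Fin m → ℝ}

theorem pd_sum {ι : Type*} {s : Finset ι} {F : ι → (Fin m → ℝ) → ℝ}
    (hF : ∀ a ∈ s, DifferentiableAt ℝ (F a) x) (i : Fin m) :
    pd (fun y => ∑ a ∈ s, F a y) i x = ∑ a ∈ s, pd (F a) i x := by
  simp only [pd, fderiv_fun_sum hF, sum_apply]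

theorem pd_comm (hf : ∀ᶠ y in 𝓝 x, DifferentiableAt ℝ f y)
    (hpd : ∀ i, DifferentiableAt ℝ (pd f i) x) (i j : Fin m) :
    pd (pd f i) j x = pd (pd f j) i x := by
  have hf' : DifferentiableAt ℝ (fderiv ℝ f) x := differentiableAt_clm_pi_iff.mpr hpd
  have pd_pd (a b : Fin m) :
      pd (pd f a) b x = fderiv ℝ (fderiv ℝ f) x (Pi.single b 1) (Pi.single a 1) := by
    unfold pd
    simp [fderiv_clm_apply hf' (differentiableAt_const _)]
  simpa only [pd_pd] using
    second_derivative_symmetric_of_eventually (hf.mono fun _ hy => hy.hasFDerivAt)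
      hf'.hasFDerivAt _ _

theorem eqOn_pd (hU : IsOpen U) (h : Set.EqOn f g U) (i : Fin m) :
    Set.EqOn (pd f i) (pd g i) U := fun _ hx =>
  DFunLike.congr_fun (h.eventuallyEq_of_mem (hU.mem_nhds hx)).fderiv_eq _

end PartialDerivatives

/-- Adaptedness of the connection with Christoffel symbols `Γ k i j = Γ^k_{ij}` on `U` to a web of
coordinate slices, the block structure being encoded by a relation `r` between indices:
`Γ^k_{ij}` vanishes unless `r i j` and `r j k`. -/
def IsWebAdapted {m : ℕ} (r : Fin m → Fin m → Prop) (U : Set (Fin m → ℝ))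
    (Γ : Fin m → Fin m → Fin m → (Fin m → ℝ) → ℝ) : Prop :=
  ∀ ⦃k i j⦄, ∀ x ∈ U, Γ k i j x ≠ 0 → r i j ∧ r j k

/-- The relation `a ∼ b` of lying in a common block of the family `B`, through which a web given by
its blocks is encoded in `IsWebAdapted`. -/
def SameBlock {ι α : Type*} (B : ι → Finset α) (a b : α) : Prop :=
  ∃ s, a ∈ B s ∧ b ∈ B s

theorem isTrans_sameBlock {ι α : Type*} {B : ι → Finset α}
    (hB : Pairwise (Function.onFun Disjoint B)) : IsTrans α (SameBlock B) where
  trans := by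
    rintro a b c ⟨s, has, hbs⟩ ⟨t, hbt, hct⟩
    obtain rfl : s = t := hB.eq (Finset.not_disjoint_iff.mpr ⟨b, hbs, hbt⟩)
    exact ⟨s, has, hct⟩

section Ricci

variable {m : ℕ} {r : Fin m → Fin m → Prop} {U : Set (Fin m → ℝ)}
  {Γ : Fin m → Fin m → Fin m → (Fin m → ℝ) → ℝ} {i j : Fin m} {x : Fin m → ℝ}

namespace IsWebAdapted

theorem of_sameBlock {ι : Type*} {B : ι → Finset (Fin m)}
    (hΓ : ∀ k i j, (¬ ∃ s, i ∈ B s ∧ j ∈ B s ∧ k ∈ B s) → ∀ x ∈ U, Γ k i j x = 0) :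
    IsWebAdapted (SameBlock B) U Γ := by
  intro k i j x hx hne
  obtain ⟨s, hi, hj, hk⟩ := by_contra fun hs => hne (hΓ k i j hs x hx)
  exact ⟨⟨s, hi, hj⟩, ⟨s, hj, hk⟩⟩

theorem christoffel_eqOn_zero (hΓ : IsWebAdapted r U Γ) (hij : ¬ r i j) (k : Fin m) :
    Set.EqOn (Γ k i j) 0 U :=
  fun x hx => by_contra fun hne => hij (hΓ x hx hne).1

theorem christoffel_mul_eq_zero [IsTrans (Fin m) r] (hΓ : IsWebAdapted r U Γ) (hij : ¬ r i j)
    (hx : x ∈ U) (k l : Fin m) : Γ k i l x * Γ l k j x = 0 := by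
  by_contra hne
  obtain ⟨hil, hlk⟩ := hΓ x hx (left_ne_zero_of_mul hne)
  obtain ⟨hkj, -⟩ := hΓ x hx (right_ne_zero_of_mul hne)
  exact hij (_root_.trans (_root_.trans hil hlk) hkj)

theorem ricci_eq_sum_pd [IsTrans (Fin m) r] (hΓ : IsWebAdapted r U Γ) (hU : IsOpen U)
    (hij : ¬ r i j) (hx : x ∈ U) : ricci Γ i j x = ∑ k, pd (Γ k k j) i x := by
  refine Finset.sum_congr rfl fun k _ => ?_
  have hpd : pd (Γ k i j) k x = 0 := by
    simpa [pd] using eqOn_pd hU (hΓ.christoffel_eqOn_zero hij k) k hx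
  have hΓΓ (l : Fin m) : Γ k i l x * Γ l k j x - Γ k k l x * Γ l i j x = 0 := by
    simp [hΓ.christoffel_mul_eq_zero hij hx, hΓ.christoffel_eqOn_zero hij l hx]
  simp only [hpd, hΓΓ, Finset.sum_const_zero, sub_zero, add_zero]

end IsWebAdapted

theorem stmt3_general [IsTrans (Fin m) r] (hU : IsOpen U) {φ : (Fin m → ℝ) → ℝ}
    (hφ : DifferentiableOn ℝ φ U) (hΓdiff : ∀ k j, DifferentiableOn ℝ (Γ k k j) U)
    (hΓsymm : ∀ k i j, ∀ x ∈ U, Γ k i j x = Γ k j i x) (hΓ : IsWebAdapted r U Γ)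
    (hΓvol : ∀ i, ∀ x ∈ U, ∑ k, Γ k i k x = pd φ i x) (hij : ¬ r i j) (hx : x ∈ U) :
    ricci Γ i j x = pd (pd φ i) j x := by
  have hUx : U ∈ nhds x := hU.mem_nhds hx
  have hΓdiffAt (a k : Fin m) : DifferentiableAt ℝ (Γ k k a) x := (hΓdiff k a).differentiableAt hUx
  have htrace (a : Fin m) : Set.EqOn (fun y => ∑ k, Γ k k a y) (pd φ a) U := fun y hy =>
    (Finset.sum_congr rfl fun k _ => hΓsymm k k a y hy).trans (hΓvol a y hy)
  have hpd (a : Fin m) : DifferentiableAt ℝ (pd φ a) x :=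
    (DifferentiableAt.fun_sum fun k _ => hΓdiffAt a k).congr_of_eventuallyEq
      ((htrace a).symm.eventuallyEq_of_mem hUx)
  calc ricci Γ i j x
      = ∑ k, pd (Γ k k j) i x := hΓ.ricci_eq_sum_pd hU hij hx
    _ = pd (fun y => ∑ k, Γ k k j y) i x := (pd_sum (fun k _ => hΓdiffAt j k) i).symm
    _ = pd (pd φ j) i x := eqOn_pd hU (htrace j) i hx
    _ = pd (pd φ i) j x := pd_comm (hφ.eventually_differentiableAt hUx) hpd j i

end Ricci

/-- For any torsion-free connection adapted to the block web (keeping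
the block foliations and the volume form `h·dx₁∧…∧dx_m` parallel), the cross-block
components of the Ricci tensor equal `∂²(log h)/∂x_k∂x_l`. -/
theorem stmt3 {m n : ℕ} (hm : 2 ≤ m) (hn : 2 ≤ n)
    (B : Fin n → Finset (Fin m))
    (hBne : ∀ i, (B i).Nonempty)
    (hBdisj : ∀ i j, i ≠ j → Disjoint (B i) (B j))
    (hBcover : ∀ k, ∃ i, k ∈ B i)
    (U : Set (Fin m → ℝ)) (hU : IsOpen U)
    (h : (Fin m → ℝ) → ℝ)
    (hsm : ContDiffOn ℝ (⊤ : ℕ∞) h U) (hpos : ∀ x ∈ U, 0 < h x)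
    (Γ : Fin m → Fin m → Fin m → (Fin m → ℝ) → ℝ)
    (hΓsm : ∀ k i j, ContDiffOn ℝ (⊤ : ℕ∞) (Γ k i j) U)
    (hΓsymm : ∀ k i j, ∀ x ∈ U, Γ k i j x = Γ k j i x)
    (hΓblock : ∀ k i j, (¬ ∃ s : Fin n, i ∈ B s ∧ j ∈ B s ∧ k ∈ B s) →
      ∀ x ∈ U, Γ k i j x = 0)
    (hΓvol : ∀ i, ∀ x ∈ U, ∑ k, Γ k i k x = pd (fun z => Real.log (h z)) i x) :
    ∀ k l : Fin m, (¬ ∃ s : Fin n, k ∈ B s ∧ l ∈ B s) →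
      ∀ x ∈ U, ricci Γ k l x = logpd2 h k l x := by
  have := isTrans_sameBlock fun s t => hBdisj s t
  exact fun k l hkl x hx => stmt3_general hU
    ((hsm.differentiableOn (by simp)).log fun y hy => (hpos y hy).ne')
    (fun a b => (hΓsm a a b).differentiableOn (by simp)) hΓsymm
    (.of_sameBlock hΓblock) hΓvol hkl hx
end
end

section
/- Let m ≥ 1 and let B_1,…,B_n be a partition of {1,…,m} into nonempty blocks of sizes c_1,…,c_n; write i ∼ j if i,j lie in the same block. The real vector space of all tensors D = (D^k_{ij})_{1≤i,j,k≤m} satisfying (i) D^k_{ij} = D^k_{ji} for all i,j,k; (ii) D^k_{ij} = 0 unless i ∼ j ∼ k; (iii) Σ_{j=1}^m D^j_{ij} = 0 for every i, has dimension Σ_{s=1}^n c_s(c_s−1)(c_s+2)/2. -/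
noncomputable section

/-- The space of difference tensors `D^k_{ij}` (encoded as `D k i j`) between two
adapted connections of a divergence-free web with block structure `B`: symmetric in the
lower indices, vanishing unless all three indices lie in a common block, and trace-free. -/
def diffTensorSpace {m n : ℕ} (B : Fin n → Finset (Fin m)) :
    Submodule ℝ (Fin m → Fin m → Fin m → ℝ) where
  carrier := {D | (∀ k i j, D k i j = D k j i) ∧
    (∀ k i j, (¬ ∃ s : Fin n, i ∈ B s ∧ j ∈ B s ∧ k ∈ B s) → D k i j = 0) ∧
    (∀ i, ∑ j, D j i j = 0)}
  add_mem' := by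
    rintro D E ⟨hD1, hD2, hD3⟩ ⟨hE1, hE2, hE3⟩
    refine ⟨fun k i j => ?_, fun k i j hn => ?_, fun i => ?_⟩
    · simp only [Pi.add_apply, hD1 k i j, hE1 k i j]
    · simp only [Pi.add_apply, hD2 k i j hn, hE2 k i j hn, add_zero]
    · simp only [Pi.add_apply, Finset.sum_add_distrib, hD3 i, hE3 i, add_zero]
  zero_mem' := by
    refine ⟨fun k i j => rfl, fun k i j _ => rfl, fun i => by simp⟩
  smul_mem' := by
    rintro c D ⟨hD1, hD2, hD3⟩
    refine ⟨fun k i j => ?_, fun k i j hn => ?_, fun i => ?_⟩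
    · simp only [Pi.smul_apply, smul_eq_mul, hD1 k i j]
    · simp only [Pi.smul_apply, smul_eq_mul, hD2 k i j hn, mul_zero]
    · simp only [Pi.smul_apply, smul_eq_mul, ← Finset.mul_sum, hD3 i, mul_zero]

/-!
Within a block, the trace condition `∑ j, D j i j = 0` expresses the diagonal component `D i i i`
through components whose three indices are not all equal. The components `D k i j` with `k` and the
unordered pair `{i, j}` in a common block `S` and not `i = j = k` are therefore free coordinates,
and a block of size `c` has `c * (c + 1).choose 2 - c` of them. No division is involved, so the
coefficients may lie in any ring over which dimension makes sense.
-/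

open Finset Function

/-- The analogue of `diffTensorSpace` with coefficients in a ring `R`, for an arbitrary family of
blocks in a finite index type `ι`. It is a left `R`-module, as `R` need not be commutative. -/
def blockDiffTensors {ι κ : Type*} [Fintype ι] (R : Type*) [Ring R] (B : κ → Finset ι) :
    Submodule R (ι → ι → ι → R) where
  carrier := {D | (∀ k i j, D k i j = D k j i) ∧
    (∀ k i j, (¬ ∃ s, i ∈ B s ∧ j ∈ B s ∧ k ∈ B s) → D k i j = 0) ∧
    (∀ i, ∑ j, D j i j = 0)}
  add_mem' := by
    rintro D E ⟨hDsymm, hDsupp, hDtrace⟩ ⟨hEsymm, hEsupp, hEtrace⟩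
    refine ⟨fun k i j => ?_, fun k i j h => ?_, fun i => ?_⟩
    · simp only [Pi.add_apply, hDsymm k i j, hEsymm k i j]
    · simp only [Pi.add_apply, hDsupp k i j h, hEsupp k i j h, add_zero]
    · simp only [Pi.add_apply, sum_add_distrib, hDtrace i, hEtrace i, add_zero]
  zero_mem' := ⟨fun _ _ _ => rfl, fun _ _ _ _ => rfl, fun _ => sum_const_zero⟩
  smul_mem' := by
    rintro c D ⟨hsymm, hsupp, htrace⟩
    refine ⟨fun k i j => ?_, fun k i j h => ?_, fun i => ?_⟩
    · simp only [Pi.smul_apply, hsymm k i j]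
    · simp only [Pi.smul_apply, hsupp k i j h, smul_zero]
    · simp only [Pi.smul_apply, ← smul_sum, htrace i, smul_zero]

theorem sub_diagonal_mem_blockDiffTensors {ι κ R : Type*} [DecidableEq ι] [Fintype ι] [Ring R]
    {B : κ → Finset ι} {E : ι → ι → ι → R} (hsymm : ∀ k i j, E k i j = E k j i)
    (hsupp : ∀ k i j, (¬ ∃ s, i ∈ B s ∧ j ∈ B s ∧ k ∈ B s) → E k i j = 0) :
    (fun k i j => E k i j - if i = k ∧ j = k then ∑ l, E l k l else 0) ∈
      blockDiffTensors R B := by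
  refine ⟨fun k i j => ?_, fun k i j h => ?_, fun i => ?_⟩
  · simp only [hsymm k i j, and_comm]
  · dsimp only
    rw [hsupp k i j h, zero_sub, neg_eq_zero, ite_eq_right_iff]
    rintro ⟨rfl, rfl⟩
    exact sum_eq_zero fun l _ => hsupp l _ l fun ⟨s, hi, _, _⟩ => h ⟨s, hi, hi, hi⟩
  · simp

section FreeIndices

variable {ι : Type*} [DecidableEq ι]

/-- The indices `(k, {i, j})` of the free components of a symmetric trace-free tensor `D k i j` on
a single block `S`: all those in `S` except the ones with `i = j = k`. -/
def freeIndices (S : Finset ι) : Finset (ι × Sym2 ι) :=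
  (S ×ˢ S.sym2) \ S.image fun k => (k, s(k, k))

theorem mk_mem_freeIndices {S : Finset ι} {k i j : ι} :
    (k, s(i, j)) ∈ freeIndices S ↔ (i ∈ S ∧ j ∈ S ∧ k ∈ S) ∧ ¬(i = k ∧ j = k) := by
  simp only [freeIndices, mem_sdiff, mem_product, mk_mem_sym2_iff, mem_image, Prod.mk.injEq,
    Sym2.eq_iff]
  grind

theorem card_freeIndices (S : Finset ι) : #(freeIndices S) = #S * (#S + 1).choose 2 - #S := by
  have hdiag : (S.image fun k => (k, s(k, k))) ⊆ S ×ˢ S.sym2 :=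
    image_subset_iff.2 fun k hk => mem_product.2 ⟨hk, mk_mem_sym2_iff.2 ⟨hk, hk⟩⟩
  have hinj : Injective fun k : ι => (k, s(k, k)) := fun _ _ h => congrArg Prod.fst h
  rw [freeIndices, card_sdiff_of_subset hdiag, card_product, card_sym2,
    card_image_of_injective S hinj]

theorem disjoint_freeIndices {S T : Finset ι} (h : Disjoint S T) :
    Disjoint (freeIndices S) (freeIndices T) :=
  (disjoint_product.2 (Or.inl h)).mono sdiff_subset sdiff_subset

end FreeIndices

theorem mul_choose_two_sub_self (c : ℕ) :
    c * (c + 1).choose 2 - c = c * (c - 1) * (c + 2) / 2 := by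
  cases c with
  | zero => rfl
  | succ d =>
    have hchoose : 2 * (d + 1 + 1).choose 2 = (d + 1 + 1) * (d + 1) := by
      rw [Nat.choose_two_right, Nat.mul_div_cancel' (Nat.even_mul_pred_self _).two_dvd,
        Nat.add_sub_cancel]
    have htwice : 2 * ((d + 1) * (d + 1 + 1).choose 2) =
        (d + 1) * d * (d + 1 + 2) + 2 * (d + 1) := by
      rw [mul_left_comm, hchoose]
      ring
    rw [Nat.add_sub_cancel]
    omega

section FreeComponents

variable {ι κ R : Type*} [DecidableEq ι] [Fintype κ] [Ring R]

/-- The indices of the free components of a tensor in `blockDiffTensors R B`, collected over all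
blocks. -/
def blockFreeIndices (B : κ → Finset ι) : Finset (ι × Sym2 ι) :=
  univ.biUnion fun s => freeIndices (B s)

theorem mk_mem_blockFreeIndices {B : κ → Finset ι} {k i j : ι} :
    (k, s(i, j)) ∈ blockFreeIndices B ↔
      (∃ s, i ∈ B s ∧ j ∈ B s ∧ k ∈ B s) ∧ ¬(i = k ∧ j = k) := by
  simp only [blockFreeIndices, mem_biUnion, mem_univ, true_and, mk_mem_freeIndices,
    exists_and_right]

theorem card_blockFreeIndices {B : κ → Finset ι} (hB : Pairwise (Disjoint on B)) :
    #(blockFreeIndices B) = ∑ s, #(B s) * (#(B s) - 1) * (#(B s) + 2) / 2 := by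
  rw [blockFreeIndices, card_biUnion fun s _ t _ hst => disjoint_freeIndices (hB hst)]
  exact sum_congr rfl fun s _ => (card_freeIndices (B s)).trans (mul_choose_two_sub_self _)

variable [Fintype ι]

/-- The free components of a tensor in `blockDiffTensors R B`; symmetry of `D k` makes `D k i j` a
function of the unordered pair `{i, j}`. -/
def freeComponents (B : κ → Finset ι) :
    blockDiffTensors R B →ₗ[R] (blockFreeIndices B → R) where
  toFun D p := Sym2.lift ⟨D.1 p.1.1, D.2.1 p.1.1⟩ p.1.2
  map_add' D E := by
    ext ⟨⟨k, z⟩, hp⟩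
    induction z using Sym2.ind with | _ i j => rfl
  map_smul' c D := by
    ext ⟨⟨k, z⟩, hp⟩
    induction z using Sym2.ind with | _ i j => rfl

theorem freeComponents_apply_mk {B : κ → Finset ι} (D : blockDiffTensors R B) {k i j : ι}
    (h : (k, s(i, j)) ∈ blockFreeIndices B) :
    freeComponents B D ⟨(k, s(i, j)), h⟩ = D.1 k i j :=
  rfl

theorem freeComponents_injective (B : κ → Finset ι) :
    Injective (freeComponents (R := R) B) := by
  refine (injective_iff_map_eq_zero _).2 fun D hD => ?_
  obtain ⟨-, hsupp, htrace⟩ := D.2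
  have hoff (k i j : ι) (hijk : ¬(i = k ∧ j = k)) : D.1 k i j = 0 := by
    by_cases hs : ∃ s, i ∈ B s ∧ j ∈ B s ∧ k ∈ B s
    · exact congrFun hD ⟨_, mk_mem_blockFreeIndices.2 ⟨hs, hijk⟩⟩
    · exact hsupp k i j hs
  have hdiag (i : ι) : D.1 i i i = 0 := by
    rw [← htrace i]
    exact (Fintype.sum_eq_single i fun j hj => hoff j i j fun h => hj h.1.symm).symm
  refine Subtype.ext (funext₃ fun k i j => ?_)
  by_cases hijk : i = k ∧ j = k
  · obtain ⟨rfl, rfl⟩ := hijk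
    exact hdiag _
  · exact hoff k i j hijk

theorem freeComponents_surjective (B : κ → Finset ι) :
    Surjective (freeComponents (R := R) B) := by
  intro f
  let E (k i j : ι) : R := extend Subtype.val f (0 : ι × Sym2 ι → R) (k, s(i, j))
  have hsymm (k i j : ι) : E k i j = E k j i := by
    simp only [E, Sym2.eq_swap]
  have hsupp (k i j : ι) (h : ¬ ∃ s, i ∈ B s ∧ j ∈ B s ∧ k ∈ B s) : E k i j = 0 := by
    refine extend_apply' f _ _ ?_
    rintro ⟨p, hp⟩
    exact h (mk_mem_blockFreeIndices.1 (hp ▸ p.2)).1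
  refine ⟨⟨_, sub_diagonal_mem_blockDiffTensors hsymm hsupp⟩, ?_⟩
  ext ⟨⟨k, z⟩, hp⟩
  induction z using Sym2.ind with | _ i j =>
  rw [freeComponents_apply_mk _ hp]
  dsimp only
  rw [if_neg (mk_mem_blockFreeIndices.1 hp).2, sub_zero]
  exact Subtype.val_injective.extend_apply f _ ⟨_, hp⟩

/-- The free components as linear coordinates on `blockDiffTensors R B`. -/
def freeComponentsEquiv (B : κ → Finset ι) :
    blockDiffTensors R B ≃ₗ[R] (blockFreeIndices B → R) :=
  LinearEquiv.ofBijective (freeComponents B)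
    ⟨freeComponents_injective B, freeComponents_surjective B⟩

end FreeComponents

theorem stmt6_general {ι κ R : Type*} [Fintype ι] [Fintype κ] [Ring R] [StrongRankCondition R]
    (B : κ → Finset ι) (hB : Pairwise (Disjoint on B)) :
    Module.finrank R (blockDiffTensors R B) =
      ∑ s, #(B s) * (#(B s) - 1) * (#(B s) + 2) / 2 := by
  classical
  rw [(freeComponentsEquiv B).finrank_eq, Module.finrank_fintype_fun_eq_card, Fintype.card_coe,
    card_blockFreeIndices hB]

/-- The space of difference tensors of adapted connections of a
divergence-free web with blocks of sizes `c_s` has dimension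
`Σ_s c_s(c_s−1)(c_s+2)/2`. -/
theorem stmt6 {m n : ℕ} (hm : 1 ≤ m)
    (B : Fin n → Finset (Fin m))
    (hBne : ∀ i, (B i).Nonempty)
    (hBdisj : ∀ i j, i ≠ j → Disjoint (B i) (B j))
    (hBcover : ∀ k, ∃ i, k ∈ B i) :
    Module.finrank ℝ (diffTensorSpace B) =
      ∑ s, (B s).card * ((B s).card - 1) * ((B s).card + 2) / 2 :=
  stmt6_general B fun i j hij => hBdisj i j hij
end
end

section
/- Let m ≥ 1 and let h be a smooth positive function on a neighborhood of 0 in ℝ^m. Fix i ∈ {1,…,m} and define f_i(x,s) = ∫_{[0,1]^{m−1}} h(t_1x_1,…,t_{i−1}x_{i−1}, s, t_{i+1}x_{i+1},…,t_mx_m) dt (the integral over the unit cube in the variables t_k, k ≠ i). Then there exist a neighborhood U of 0 in ℝ^m and a smooth function ρ_i : U → ℝ with ρ_i(0) = 0 such that ∫_0^{x_i} f_i(x,s) ds + ∫_0^{ρ_i(x)} f_i(x,s) ds = 0 for all x ∈ U; moreover ρ_i is unique in the sense that for each x ∈ U, ρ_i(x) is the only real number u with (x_1,…,x_{i−1},u,x_{i+1},…,x_m)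 ∈ U satisfying ∫_0^{x_i} f_i(x,s) ds + ∫_0^{u} f_i(x,s) ds = 0. -/
open MeasureTheory

noncomputable section

/-- The fiber integral `f_i(x,s) = ∫_{[0,1]^{m−1}} h(t₁x₁,…,s,…,t_mx_m) dt` (in the
`i`-th slot one puts `s`; since the integrand does not depend on `t_i`, integrating over
the full unit cube `[0,1]^m` gives the same value). -/
def reflInt {m : ℕ} (h : (Fin m → ℝ) → ℝ) (i : Fin m) (x : Fin m → ℝ) (s : ℝ) : ℝ :=
  ∫ t in Set.Icc (0 : Fin m → ℝ) 1, h (Function.update (fun k => t k * x k) i s)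

/-! Write `G(x, u) = ∫_0^{x_i} f_i(x, s) ds + ∫_0^u f_i(x, s) ds` and let `h` be defined and
positive on the sup-norm ball of radius `r` about `0`. For `‖(x, u)‖ < r`, differentiation under the
integral over the compact cube shows that `G` is as smooth as `h`, and `∂G/∂u = f_i > 0`. Hence
`G(x, ·)` is strictly increasing, so the zero set of `G` in this ball of pairs is the graph of a
function `ρ`, and the implicit function theorem at each zero shows that `ρ` has an open domain `U`
and is as smooth as `h`. Since `U` lies in the ball of radius `r`, a competitor `u` with `x` and
`Function.update x i u` in `U` satisfies `‖(x, u)‖ < r`, which gives uniqueness. -/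

section ContinuousParametricIntegral

open Topology

variable {P T F : Type*} [TopologicalSpace P] [TopologicalSpace T]
  {K : Set T} {f : P × T → F} {p : P}

theorem continuousOn_slice_of_forall_continuousAt [TopologicalSpace F]
    (hf : ∀ t ∈ K, ContinuousAt f (p, t)) :
    ContinuousOn (fun t => f (p, t)) K := fun t ht =>
  ((hf t ht).comp (by fun_prop : ContinuousAt (fun t => (p, t)) t)).continuousWithinAt

variable [NormedAddCommGroup F]

theorem exists_eventually_forall_norm_le_of_isCompact (hK : IsCompact K)
    (hf : ∀ t ∈ K, ContinuousAt f (p, t)) :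
    ∃ C, ∀ᶠ q in 𝓝 p, ∀ t ∈ K, ‖f (q, t)‖ ≤ C := by
  obtain ⟨C, hC⟩ :=
    hK.exists_bound_of_continuousOn (continuousOn_slice_of_forall_continuousAt hf)
  refine ⟨C + 1, hK.eventually_forall_of_forall_eventually fun t ht => ?_⟩
  exact (hf t ht).norm.eventually_le_const ((hC t ht).trans_lt (lt_add_one C))

theorem continuousAt_setIntegral_of_isCompact [FirstCountableTopology P] [T2Space T]
    [MeasurableSpace T] [OpensMeasurableSpace T] {μ : Measure T} [IsFiniteMeasureOnCompacts μ]
    [NormedSpace ℝ F] (hK : IsCompact K) (hf : ∀ᶠ q in 𝓝 p, ∀ t ∈ K, ContinuousAt f (q, t)) :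
    ContinuousAt (fun q => ∫ t in K, f (q, t) ∂μ) p := by
  obtain ⟨C, hC⟩ := exists_eventually_forall_norm_le_of_isCompact hK hf.self_of_nhds
  refine continuousAt_of_dominated (bound := fun _ => C) ?_ ?_
    (integrableOn_const hK.measure_lt_top.ne) ?_
  · filter_upwards [hf] with q hq
    exact (continuousOn_slice_of_forall_continuousAt hq).aestronglyMeasurable_of_isCompact hK
      hK.measurableSet
  · filter_upwards [hC] with q hq
    exact ae_restrict_of_forall_mem hK.measurableSet hq
  · exact ae_restrict_of_forall_mem hK.measurableSet fun t ht =>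
      (hf.self_of_nhds t ht).comp_of_eq (by fun_prop : ContinuousAt (fun q => (q, t)) p) rfl

end ContinuousParametricIntegral

section SmoothParametricIntegral

open Topology
open scoped ContDiff

universe u v

variable {P F : Type u} [NormedAddCommGroup P] [NormedSpace ℝ P]
  [NormedAddCommGroup F] [NormedSpace ℝ F]
  {T : Type v} [NormedAddCommGroup T] [NormedSpace ℝ T]
  {K : Set T} {f : P × T → F} {p : P}

theorem eventually_forall_contDiffAt_of_isCompact {n : ℕ∞ω} (hn : n ≠ ∞) (hK : IsCompact K)
    (hf : ∀ t ∈ K, ContDiffAt ℝ n f (p, t)) :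
    ∀ᶠ q in 𝓝 p, ∀ t ∈ K, ContDiffAt ℝ n f (q, t) :=
  hK.eventually_forall_of_forall_eventually fun t ht => (hf t ht).eventually hn

variable [MeasurableSpace T] [OpensMeasurableSpace T] {μ : Measure T}
  [IsFiniteMeasureOnCompacts μ]

theorem hasFDerivAt_setIntegral_of_isCompact (hK : IsCompact K)
    (hf : ∀ t ∈ K, ContDiffAt ℝ 1 f (p, t)) :
    HasFDerivAt (fun q => ∫ t in K, f (q, t) ∂μ)
      (∫ t in K, fderiv ℝ f (p, t) ∘L .inl ℝ P T ∂μ) p := by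
  have hf_near : ∀ᶠ q in 𝓝 p, ∀ t ∈ K, ContDiffAt ℝ 1 f (q, t) :=
    eventually_forall_contDiffAt_of_isCompact (by simp) hK hf
  have hslice {q : P} (hq : ∀ t ∈ K, ContDiffAt ℝ 1 f (q, t)) :
      ContinuousOn (fun t => f (q, t)) K :=
    continuousOn_slice_of_forall_continuousAt fun t ht => (hq t ht).continuousAt
  have hpartial : ∀ t ∈ K, ContinuousAt (fun z => fderiv ℝ f z ∘L .inl ℝ P T) (p, t) :=
    fun t ht => ((hf t ht).fderiv_right (m := 0) (by simp)).continuousAt.clm_comp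
      continuousAt_const
  have hpartial_slice := continuousOn_slice_of_forall_continuousAt hpartial
  obtain ⟨C, hC⟩ := exists_eventually_forall_norm_le_of_isCompact hK hpartial
  refine hasFDerivAt_integral_of_dominated_of_fderiv_le (bound := fun _ => C)
    (F' := fun q t => fderiv ℝ f (q, t) ∘L .inl ℝ P T) (hf_near.and hC) ?_
    ((hslice hf).integrableOn_compact hK)
    (hpartial_slice.aestronglyMeasurable_of_isCompact hK hK.measurableSet) ?_
    (integrableOn_const hK.measure_lt_top.ne) ?_
  · filter_upwards [hf_near] with q hq
    exact (hslice hq).aestronglyMeasurable_of_isCompact hK hK.measurableSet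
  · exact ae_restrict_of_forall_mem hK.measurableSet fun t ht q hq => hq.2 t ht
  · exact ae_restrict_of_forall_mem hK.measurableSet fun t ht q hq =>
      ((hq.1 t ht).differentiableAt one_ne_zero).hasFDerivAt.comp q (hasFDerivAt_prodMk_left q t)

theorem contDiffAt_setIntegral_of_isCompact_nat (hK : IsCompact K) (n : ℕ)
    (hf : ∀ t ∈ K, ContDiffAt ℝ n f (p, t)) :
    ContDiffAt ℝ n (fun q => ∫ t in K, f (q, t) ∂μ) p := by
  have hf_near := eventually_forall_contDiffAt_of_isCompact (by simp) hK hf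
  induction n generalizing F with
  | zero =>
    refine contDiffAt_zero.2 ⟨_, hf_near.eventually_nhds, fun q hq => ?_⟩
    refine (continuousAt_setIntegral_of_isCompact hK ?_).continuousWithinAt
    exact hq.mono fun q' hq' t ht => (hq' t ht).continuousAt
  | succ n ih =>
    refine contDiffAt_succ_iff_hasFDerivAt.2
      ⟨fun q => ∫ t in K, fderiv ℝ f (q, t) ∘L .inl ℝ P T ∂μ, ⟨_, hf_near, fun q hq => ?_⟩, ?_⟩
    · exact hasFDerivAt_setIntegral_of_isCompact hK fun t ht => (hq t ht).of_le (by simp)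
    · have hpartial : ∀ t ∈ K, ContDiffAt ℝ n (fun z => fderiv ℝ f z ∘L .inl ℝ P T) (p, t) :=
        fun t ht => ((hf t ht).fderiv_right le_rfl).clm_comp contDiffAt_const
      exact ih hpartial (eventually_forall_contDiffAt_of_isCompact (by simp) hK hpartial)

theorem contDiffAt_setIntegral_of_isCompact {n : ℕ∞} (hK : IsCompact K)
    (hf : ∀ t ∈ K, ContDiffAt ℝ n f (p, t)) :
    ContDiffAt ℝ n (fun q => ∫ t in K, f (q, t) ∂μ) p := by
  cases n with
  | top =>
    exact contDiffAt_infty.2 fun n => contDiffAt_setIntegral_of_isCompact_nat hK n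
      fun t ht => contDiffAt_infty.1 (hf t ht) n
  | coe n => exact contDiffAt_setIntegral_of_isCompact_nat hK n hf

theorem contDiffAt_intervalIntegral_zero {n : ℕ∞} {f : P × ℝ → F} {u : ℝ}
    (hf : ∀ s ∈ Set.uIcc 0 u, ContDiffAt ℝ n f (p, s)) :
    ContDiffAt ℝ n (fun q : P × ℝ => ∫ s in (0 : ℝ)..q.2, f (q.1, s)) (p, u) := by
  -- Rescaling to the fixed domain `[0, 1]` moves the variable endpoint into the integrand.
  have hrescale (q : P × ℝ) : ∫ s in (0 : ℝ)..q.2, f (q.1, s)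
      = q.2 • ∫ σ in Set.Icc (0 : ℝ) 1, f (q.1, q.2 * σ) := by
    rw [integral_Icc_eq_integral_Ioc, ← intervalIntegral.integral_of_le zero_le_one,
      intervalIntegral.smul_integral_comp_mul_left fun s => f (q.1, s), mul_zero, mul_one]
  simp only [hrescale]
  refine contDiffAt_snd.smul (contDiffAt_setIntegral_of_isCompact
    (f := fun z : (P × ℝ) × ℝ => f (z.1.1, z.1.2 * z.2)) isCompact_Icc fun σ hσ => ?_)
  have hmem : u * σ ∈ Set.uIcc 0 u := by
    simpa only [smul_eq_mul, mul_comm] using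
      (convex_uIcc 0 u).smul_mem_of_zero_mem Set.left_mem_uIcc Set.right_mem_uIcc hσ
  exact (hf _ hmem).comp ((p, u), σ)
    (by fun_prop : ContDiffAt ℝ n (fun z : (P × ℝ) × ℝ => (z.1.1, z.1.2 * z.2)) ((p, u), σ))

end SmoothParametricIntegral

section ImplicitFunction

open Set Topology
open scoped ContDiff

variable {𝕜 E₁ E₂ F : Type*} [RCLike 𝕜]
  [NormedAddCommGroup E₁] [NormedSpace 𝕜 E₁] [CompleteSpace E₁]
  [NormedAddCommGroup E₂] [NormedSpace 𝕜 E₂] [CompleteSpace E₂]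
  [NormedAddCommGroup F] [NormedSpace 𝕜 F] [CompleteSpace F]
  {n : ℕ∞ω} {f : E₁ × E₂ → F} {c : F} {Ω : Set (E₁ × E₂)}

theorem exists_levelSet_eq_graphOn_contDiffOn (hn : n ≠ 0) (hΩ : IsOpen Ω)
    (hf : ContDiffOn 𝕜 n f Ω)
    (hinv : ∀ p ∈ Ω ∩ f ⁻¹' {c}, (fderiv 𝕜 f p ∘L .inr 𝕜 E₁ E₂).IsInvertible)
    (hinj : InjOn Prod.fst (Ω ∩ f ⁻¹' {c})) :
    ∃ (U : Set E₁) (ρ : E₁ → E₂),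
      IsOpen U ∧ ContDiffOn 𝕜 n ρ U ∧ Ω ∩ f ⁻¹' {c} = U.graphOn ρ := by
  set Z := Ω ∩ f ⁻¹' {c}
  obtain ⟨ρ, hρ⟩ : ∃ ρ : E₁ → E₂, Z = (Prod.fst '' Z).graphOn ρ :=
    exists_eq_graphOn_image_fst.2 hinj
  -- For `n = ∞`, being `C^n` at one point does not give `C^n` nearby, so an implicit function is
  -- taken at every point of `Z`; by `hinj` they all agree with `ρ`.
  have hlocal : ∀ p ∈ Z, ∃ ϕ : E₁ → E₂,
      ContDiffAt 𝕜 n ϕ p.1 ∧ ∀ᶠ y in 𝓝 p.1, (y, ϕ y) ∈ Z := by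
    intro p hp
    have hfp := hf.contDiffAt (hΩ.mem_nhds hp.1)
    have hϕ := hfp.contDiffAt_implicitFunction hn (hinv p hp)
    have hϕp := hfp.implicitFunction_apply_self hn (hinv p hp)
    have hϕf := hfp.eventually_apply_implicitFunction hn (hinv p hp)
    have hϕΩ : ∀ᶠ y in 𝓝 p.1, (y, hfp.implicitFunction hn (hinv p hp) y) ∈ Ω :=
      (continuousAt_id.prodMk hϕ.continuousAt).eventually_mem
        (hΩ.mem_nhds (by simpa only [id, hϕp] using hp.1))
    exact ⟨_, hϕ, hϕΩ.and (hϕf.mono fun y hy => hy.trans hp.2)⟩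
  refine ⟨Prod.fst '' Z, ρ, isOpen_iff_mem_nhds.2 ?_, ?_, hρ⟩
  · rintro _ ⟨p, hp, rfl⟩
    obtain ⟨ϕ, -, hϕ⟩ := hlocal p hp
    exact hϕ.mono fun y hy => ⟨_, hy, rfl⟩
  · rintro _ ⟨p, hp, rfl⟩
    obtain ⟨ϕ, hϕ, hϕ_mem⟩ := hlocal p hp
    have hρϕ : ρ =ᶠ[𝓝 p.1] ϕ := hϕ_mem.mono fun y hy => (mem_graphOn.1 (hρ ▸ hy)).2
    exact (hϕ.congr_of_eventuallyEq hρϕ).contDiffWithinAt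

end ImplicitFunction

section ScalarEquation

open Set

theorem isInvertible_fderiv_comp_inr_of_hasDerivAt {𝕜 E : Type*} [NontriviallyNormedField 𝕜]
    [NormedAddCommGroup E] [NormedSpace 𝕜 E] {f : E × 𝕜 → 𝕜} {p : E × 𝕜} {d : 𝕜}
    (hf : DifferentiableAt 𝕜 f p) (hd : HasDerivAt (fun u => f (p.1, u)) d p.2) (hd0 : d ≠ 0) :
    (fderiv 𝕜 f p ∘L .inr 𝕜 E 𝕜).IsInvertible := by
  have hpartial : HasFDerivAt (fun u => f (p.1, u)) (fderiv 𝕜 f p ∘L .inr 𝕜 E 𝕜) p.2 :=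
    hf.hasFDerivAt.comp p.2 (hasFDerivAt_prodMk_right p.1 p.2)
  refine ⟨ContinuousLinearEquiv.unitsEquivAut 𝕜 (Units.mk0 d hd0), ?_⟩
  rw [hpartial.unique hd.hasFDerivAt]
  ext
  simp

theorem injOn_fst_inter_levelSet_of_hasDerivAt_pos {E : Type*} {f g : E × ℝ → ℝ} {c : ℝ}
    {Ω : Set (E × ℝ)} (hΩ : ∀ x, (Prod.mk x ⁻¹' Ω).OrdConnected)
    (hf : ∀ p ∈ Ω, HasDerivAt (fun u => f (p.1, u)) (g p) p.2) (hg : ∀ p ∈ Ω, 0 < g p) :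
    InjOn Prod.fst (Ω ∩ f ⁻¹' {c}) := by
  rintro ⟨x, u⟩ ⟨hu, hfu⟩ ⟨y, v⟩ ⟨hv, hfv⟩ rfl
  have hsub : interior (Prod.mk x ⁻¹' Ω) ⊆ Prod.mk x ⁻¹' Ω := interior_subset
  have hmono : StrictMonoOn (fun u => f (x, u)) (Prod.mk x ⁻¹' Ω) :=
    strictMonoOn_of_hasDerivWithinAt_pos (f' := fun u => g (x, u)) (hΩ x).convex
      (fun w hw => (hf (x, w) hw).continuousAt.continuousWithinAt)
      (fun w hw => (hf (x, w) (hsub hw)).hasDerivWithinAt) fun w hw => hg (x, w) (hsub hw)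
  exact congrArg (Prod.mk x) (hmono.injOn hu hv (hfu.trans hfv.symm))

end ScalarEquation

theorem setIntegral_pos_of_forall_pos {α : Type*} [MeasurableSpace α] {μ : Measure α} {s : Set α}
    {f : α → ℝ} (hs : MeasurableSet s) (hμs : μ s ≠ 0) (hf : IntegrableOn f s μ)
    (hpos : ∀ a ∈ s, 0 < f a) : 0 < ∫ a in s, f a ∂μ := by
  have hsupport : s ⊆ Function.support f := fun a ha => (hpos a ha).ne'
  rw [setIntegral_pos_iff_support_of_nonneg_ae
    (ae_restrict_of_forall_mem hs fun a ha => (hpos a ha).le) hf,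
    Set.inter_eq_right.2 hsupport]
  exact pos_iff_ne_zero.2 hμs

theorem contDiff_update_mul {m : ℕ} (i : Fin m) {n : WithTop ℕ∞} :
    ContDiff ℝ n fun z : ((Fin m → ℝ) × ℝ) × (Fin m → ℝ) =>
      Function.update (fun k => z.2 k * z.1.1 k) i z.1.2 := by
  refine contDiff_pi.2 fun k => ?_
  obtain rfl | hk := eq_or_ne k i
  · simpa only [Function.update_self] using contDiff_fst.snd
  · simp only [Function.update_of_ne hk]
    fun_prop

theorem norm_update_mul_le {m : ℕ} (i : Fin m) {t : Fin m → ℝ} (ht : t ∈ Set.Icc 0 1)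
    (p : (Fin m → ℝ) × ℝ) : ‖Function.update (fun k => t k * p.1 k) i p.2‖ ≤ ‖p‖ := by
  refine (pi_norm_le_iff_of_nonneg (norm_nonneg p)).2 fun k => ?_
  obtain rfl | hk := eq_or_ne k i
  · simpa only [Function.update_self] using norm_snd_le p
  · have htk : ‖t k‖ ≤ 1 := by
      rw [Real.norm_of_nonneg (ht.1 k)]
      exact ht.2 k
    rw [Function.update_of_ne hk, norm_mul]
    calc ‖t k‖ * ‖p.1 k‖ ≤ ‖p.1 k‖ := mul_le_of_le_one_left (norm_nonneg _) htk
      _ ≤ ‖p.1‖ := norm_le_pi_norm p.1 k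
      _ ≤ ‖p‖ := norm_fst_le p

theorem ordConnected_preimage_prodMk_ball {E : Type*} [PseudoMetricSpace E] (x : E)
    (c : E × ℝ) (r : ℝ) : (Prod.mk x ⁻¹' Metric.ball c r).OrdConnected := by
  rw [← Prod.mk.eta (p := c), ← ball_prod_same]
  by_cases hx : x ∈ Metric.ball c.1 r
  · rw [Set.mk_preimage_prod_right hx, Real.ball_eq_Ioo]
    exact Set.ordConnected_Ioo
  · rw [Set.mk_preimage_prod_right_eq_empty hx]
    exact Set.ordConnected_empty

/-- The primitive `∫_0^u f_i(x, s) ds` of the fiber integral, as a function of the pair `(x, u)`.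
Up to the factor `∏_{k ≠ i} x_k` it is the signed `h`-volume of the box spanned by `0` and the
point `x` with `i`-th coordinate replaced by `u`. -/
def reflPrimitive {m : ℕ} (h : (Fin m → ℝ) → ℝ) (i : Fin m) (p : (Fin m → ℝ) × ℝ) : ℝ :=
  ∫ s in (0 : ℝ)..p.2, reflInt h i p.1 s

/-- The left-hand side of the equation `∫_0^{x_i} f_i(x, s) ds + ∫_0^u f_i(x, s) ds = 0` that
defines `u = ρ_i(x)`, as a function of the pair `(x, u)`. -/
def reflDefect {m : ℕ} (h : (Fin m → ℝ) → ℝ) (i : Fin m) (p : (Fin m → ℝ) × ℝ) : ℝ :=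
  reflPrimitive h i (p.1, p.1 i) + reflPrimitive h i p

section Reflection

open Metric Set

variable {m : ℕ} {n : ℕ∞} {h : (Fin m → ℝ) → ℝ} {r : ℝ} {p : (Fin m → ℝ) × ℝ}

theorem contDiffAt_comp_update_mul (i : Fin m) (hh : ContDiffOn ℝ n h (ball 0 r))
    (hp : p ∈ ball 0 r) {t : Fin m → ℝ} (ht : t ∈ Icc 0 1) :
    ContDiffAt ℝ n (fun z : ((Fin m → ℝ) × ℝ) × (Fin m → ℝ) =>
      h (Function.update (fun k => z.2 k * z.1.1 k) i z.1.2)) (p, t) := by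
  have hmem : Function.update (fun k => t k * p.1 k) i p.2 ∈ ball 0 r :=
    mem_ball_zero_iff.2 ((norm_update_mul_le i ht p).trans_lt (mem_ball_zero_iff.1 hp))
  exact (hh.contDiffAt (isOpen_ball.mem_nhds hmem)).comp (p, t) (contDiff_update_mul i).contDiffAt

theorem contDiffAt_reflInt (i : Fin m) (hh : ContDiffOn ℝ n h (ball 0 r)) (hp : p ∈ ball 0 r) :
    ContDiffAt ℝ n (fun q : (Fin m → ℝ) × ℝ => reflInt h i q.1 q.2) p :=
  contDiffAt_setIntegral_of_isCompact isCompact_Icc fun _ ht =>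
    contDiffAt_comp_update_mul i hh hp ht

theorem reflInt_pos (i : Fin m) (hh : ContinuousOn h (ball 0 r)) (hpos : ∀ x ∈ ball 0 r, 0 < h x)
    (hp : p ∈ ball 0 r) : 0 < reflInt h i p.1 p.2 := by
  have hmem : ∀ t ∈ Icc (0 : Fin m → ℝ) 1,
      Function.update (fun k => t k * p.1 k) i p.2 ∈ ball 0 r :=
    fun t ht => mem_ball_zero_iff.2 <|
      (norm_update_mul_le i ht p).trans_lt (mem_ball_zero_iff.1 hp)
  have hcont : ContinuousOn (fun t : Fin m → ℝ => h (Function.update (fun k => t k * p.1 k) i p.2))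
      (Icc 0 1) := hh.comp (by fun_prop) hmem
  exact setIntegral_pos_of_forall_pos measurableSet_Icc (by simp [Real.volume_Icc_pi])
    (hcont.integrableOn_compact isCompact_Icc) fun t ht => hpos _ (hmem t ht)

theorem mem_ball_of_mem_uIcc (hp : p ∈ ball 0 r) {s : ℝ} (hs : s ∈ uIcc 0 p.2) :
    (p.1, s) ∈ ball 0 r := by
  have hzero : (p.1, (0 : ℝ)) ∈ ball 0 r := by
    simpa using (norm_fst_le p).trans_lt (mem_ball_zero_iff.1 hp)
  exact (ordConnected_preimage_prodMk_ball p.1 0 r).uIcc_subset hzero hp hs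

theorem contDiffAt_reflPrimitive (i : Fin m) (hh : ContDiffOn ℝ n h (ball 0 r))
    (hp : p ∈ ball 0 r) : ContDiffAt ℝ n (reflPrimitive h i) p :=
  contDiffAt_intervalIntegral_zero fun _ hs =>
    contDiffAt_reflInt i hh (mem_ball_of_mem_uIcc hp hs)

theorem contDiffAt_reflDefect (i : Fin m) (hh : ContDiffOn ℝ n h (ball 0 r))
    (hp : p ∈ ball 0 r) : ContDiffAt ℝ n (reflDefect h i) p := by
  have hdiag : (p.1, p.1 i) ∈ ball 0 r := by
    refine mem_ball_zero_iff.2 (lt_of_le_of_lt ?_ (mem_ball_zero_iff.1 hp))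
    exact max_le (norm_fst_le p) ((norm_le_pi_norm p.1 i).trans (norm_fst_le p))
  exact ((contDiffAt_reflPrimitive i hh hdiag).comp p
    (by fun_prop : ContDiffAt ℝ n (fun q : (Fin m → ℝ) × ℝ => (q.1, q.1 i)) p)).add
    (contDiffAt_reflPrimitive i hh hp)

theorem hasDerivAt_reflDefect (i : Fin m) (hh : ContinuousOn h (ball 0 r)) (hp : p ∈ ball 0 r) :
    HasDerivAt (fun u => reflDefect h i (p.1, u)) (reflInt h i p.1 p.2) p.2 := by
  have hopen : IsOpen (Prod.mk p.1 ⁻¹' ball (0 : (Fin m → ℝ) × ℝ) r) :=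
    isOpen_ball.preimage (by fun_prop)
  have hcont : ContinuousOn (reflInt h i p.1) (Prod.mk p.1 ⁻¹' ball 0 r) :=
    continuousOn_slice_of_forall_continuousAt (f := fun q => reflInt h i q.1 q.2) fun _ hs =>
      (contDiffAt_reflInt i (contDiffOn_zero.2 hh) hs).continuousAt
  have hsub : uIcc 0 p.2 ⊆ Prod.mk p.1 ⁻¹' ball 0 r := fun _ => mem_ball_of_mem_uIcc hp
  have hprim : HasDerivAt (fun u => reflPrimitive h i (p.1, u)) (reflInt h i p.1 p.2) p.2 :=
    intervalIntegral.integral_hasDerivAt_right (hcont.mono hsub).intervalIntegrable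
      (hcont.stronglyMeasurableAtFilter hopen p.2 hp) (hcont.continuousAt (hopen.mem_nhds hp))
  exact hprim.const_add (reflPrimitive h i (p.1, p.1 i))

theorem injOn_fst_reflDefect_zeros (i : Fin m) (hh : ContinuousOn h (ball 0 r))
    (hpos : ∀ x ∈ ball 0 r, 0 < h x) :
    InjOn Prod.fst (ball 0 r ∩ reflDefect h i ⁻¹' {0}) :=
  injOn_fst_inter_levelSet_of_hasDerivAt_pos
    (fun x => ordConnected_preimage_prodMk_ball x 0 r)
    (fun _ hp => hasDerivAt_reflDefect i hh hp) fun _ hp => reflInt_pos i hh hpos hp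

theorem isInvertible_fderiv_reflDefect_comp_inr (i : Fin m) (hh : ContDiffOn ℝ 1 h (ball 0 r))
    (hpos : ∀ x ∈ ball 0 r, 0 < h x) (hp : p ∈ ball 0 r) :
    (fderiv ℝ (reflDefect h i) p ∘L .inr ℝ (Fin m → ℝ) ℝ).IsInvertible :=
  isInvertible_fderiv_comp_inr_of_hasDerivAt
    ((contDiffAt_reflDefect (n := 1) i hh hp).differentiableAt one_ne_zero)
    (hasDerivAt_reflDefect i hh.continuousOn hp) (reflInt_pos i hh.continuousOn hpos hp).ne'

theorem exists_reflDefect_zeros_eq_graphOn_contDiffOn (hn : n ≠ 0) (i : Fin m)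
    (hh : ContDiffOn ℝ n h (ball 0 r)) (hpos : ∀ x ∈ ball 0 r, 0 < h x) :
    ∃ (U : Set (Fin m → ℝ)) (ρ : (Fin m → ℝ) → ℝ),
      IsOpen U ∧ ContDiffOn ℝ n ρ U ∧ ball 0 r ∩ reflDefect h i ⁻¹' {0} = U.graphOn ρ := by
  have hh₁ : ContDiffOn ℝ 1 h (ball 0 r) := hh.of_le (mod_cast Order.one_le_iff_ne_zero.2 hn)
  exact exists_levelSet_eq_graphOn_contDiffOn (mod_cast hn) isOpen_ball
    (fun p hp => (contDiffAt_reflDefect i hh hp).contDiffWithinAt)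
    (fun p hp => isInvertible_fderiv_reflDefect_comp_inr i hh₁ hpos hp.1)
    (injOn_fst_reflDefect_zeros i hh.continuousOn hpos)

end Reflection

theorem stmt11_general {m : ℕ} {n : ℕ∞} (hn : n ≠ 0) (i : Fin m)
    (h : (Fin m → ℝ) → ℝ)
    (V : Set (Fin m → ℝ)) (hV : IsOpen V) (h0V : (0 : Fin m → ℝ) ∈ V)
    (hsm : ContDiffOn ℝ n h V) (hpos : ∀ x ∈ V, 0 < h x) :
    ∃ (U : Set (Fin m → ℝ)) (ρ : (Fin m → ℝ) → ℝ),
      IsOpen U ∧ (0 : Fin m → ℝ) ∈ U ∧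
      ContDiffOn ℝ n ρ U ∧ ρ 0 = 0 ∧
      (∀ x ∈ U, (∫ s in (0:ℝ)..(x i), reflInt h i x s)
        + (∫ s in (0:ℝ)..(ρ x), reflInt h i x s) = 0) ∧
      (∀ x ∈ U, ∀ u : ℝ, Function.update x i u ∈ U →
        (∫ s in (0:ℝ)..(x i), reflInt h i x s)
          + (∫ s in (0:ℝ)..u, reflInt h i x s) = 0 →
        u = ρ x) := by
  obtain ⟨r, hr, hrV⟩ := Metric.isOpen_iff.1 hV 0 h0V
  obtain ⟨U, ρ, hU, hρ, hgraph⟩ := exists_reflDefect_zeros_eq_graphOn_contDiffOn hn i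
    (hsm.mono hrV) fun x hx => hpos x (hrV hx)
  have hmem {x : Fin m → ℝ} {u : ℝ} :
      (x, u) ∈ Metric.ball 0 r ∩ reflDefect h i ⁻¹' {0} ↔ x ∈ U ∧ ρ x = u := by
    rw [hgraph, Set.mem_graphOn]
  have hzero : 0 ∈ U ∧ ρ 0 = 0 :=
    hmem.1 ⟨Metric.mem_ball_self hr, by simp [reflDefect, reflPrimitive]⟩
  have hnorm {x : Fin m → ℝ} (hx : x ∈ U) : ‖x‖ < r :=
    (norm_fst_le (x, ρ x)).trans_lt (mem_ball_zero_iff.1 (hmem.2 ⟨hx, rfl⟩).1)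
  refine ⟨U, ρ, hU, hzero.1, hρ, hzero.2, fun x hx => (hmem.2 ⟨hx, rfl⟩).2,
    fun x hx u hu hxu => (hmem.1 ⟨?_, hxu⟩).2.symm⟩
  have hu_lt : ‖u‖ < r := by
    simpa only [Function.update_self] using (norm_le_pi_norm _ i).trans_lt (hnorm hu)
  exact mem_ball_zero_iff.2 (max_lt (hnorm hx) hu_lt)

/-- Existence and uniqueness of the volume-preserving reflection
function `ρ_i`: near `0` there is a unique smooth `ρ_i` with `ρ_i(0)=0` such that
`∫_0^{x_i} f_i(x,s) ds + ∫_0^{ρ_i(x)} f_i(x,s) ds = 0`. -/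
theorem stmt11 {m : ℕ} (hm : 1 ≤ m) (i : Fin m)
    (h : (Fin m → ℝ) → ℝ)
    (V : Set (Fin m → ℝ)) (hV : IsOpen V) (h0V : (0 : Fin m → ℝ) ∈ V)
    (hsm : ContDiffOn ℝ (⊤ : ℕ∞) h V) (hpos : ∀ x ∈ V, 0 < h x) :
    ∃ (U : Set (Fin m → ℝ)) (ρ : (Fin m → ℝ) → ℝ),
      IsOpen U ∧ (0 : Fin m → ℝ) ∈ U ∧
      ContDiffOn ℝ (⊤ : ℕ∞) ρ U ∧ ρ 0 = 0 ∧
      (∀ x ∈ U, (∫ s in (0:ℝ)..(x i), reflInt h i x s)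
        + (∫ s in (0:ℝ)..(ρ x), reflInt h i x s) = 0) ∧
      (∀ x ∈ U, ∀ u : ℝ, Function.update x i u ∈ U →
        (∫ s in (0:ℝ)..(x i), reflInt h i x s)
          + (∫ s in (0:ℝ)..u, reflInt h i x s) = 0 →
        u = ρ x) :=
  stmt11_general ENat.top_ne_zero i h V hV h0V hsm hpos
end
end
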